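/- arXiv:1606.01986 — 14 statements merged into one kernel-verified Lean document; each statement's English description precedes it below -/
import Mathlib

section
/- Let n ≥ 1 be an integer and let x, y be real numbers with 0 ≤ y ≤ x. The Lebesgue measure (in ℝ^{2n}) of the convex polytope Λⁿ(x,y), consisting of all tuples (x₁,…,xₙ,y₁,…,yₙ) satisfying 0 ≤ x₁ ≤ ⋯ ≤ xₙ ≤ (x+y)/2, 0 ≤ y₁ ≤ ⋯ ≤ yₙ ≤ (x−y)/2, and yᵢ ≤ xᵢ for all 1 ≤ i ≤ n, equals (x−y)ⁿ (x+y)^{n−1} (x + (2n+1)y) / (2^{2n} n! (n+1)!). -/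
open MeasureTheory

lemma lintegral_snoc (n : ℕ) (f : (Fin (n+1) → ℝ) → ENNReal) :
    ∫⁻ u, f u = ∫⁻ z : ℝ × (Fin n → ℝ), f (Fin.snoc z.2 z.1) := by
  have h := (volume_preserving_piFinSuccAbove (fun _ : Fin (n+1) => ℝ) (Fin.last n)).symm
  rw [← h.lintegral_comp_emb (MeasurableEquiv.measurableEmbedding _)]
  refine lintegral_congr fun z => ?_
  congr 1
  simp [MeasurableEquiv.piFinSuccAbove, Fin.insertNthEquiv, Fin.insertNth_last']

lemma measurable_snoc' {n : ℕ} :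
    Measurable (fun z : ℝ × (Fin n → ℝ) => (Fin.snoc z.2 z.1 : Fin (n+1) → ℝ)) := by
  refine measurable_pi_iff.2 fun i => ?_
  refine Fin.lastCases ?_ (fun j => ?_) i
  · simpa using measurable_fst
  · simp only [Fin.snoc_castSucc]; fun_prop

lemma key (n : ℕ) (A : Set ((Fin (n+1) → ℝ) × (Fin (n+1) → ℝ))) (hA : MeasurableSet A) :
    volume A = ∫⁻ t : ℝ, ∫⁻ s : ℝ, volume {pq : (Fin n → ℝ) × (Fin n → ℝ) |
      ((Fin.snoc pq.1 s : Fin (n+1) → ℝ), (Fin.snoc pq.2 t : Fin (n+1) → ℝ)) ∈ A} := by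
  set g : (Fin (n+1) → ℝ) × (Fin (n+1) → ℝ) → ENNReal := A.indicator 1 with hg
  have hgm : Measurable g := measurable_one.indicator hA
  have hm {α : Type} [MeasurableSpace α] {s t : α → ℝ} {p q : α → Fin n → ℝ}
      (hs : Measurable s) (ht : Measurable t) (hp : Measurable p) (hq : Measurable q) :
      Measurable (fun a => g (Fin.snoc (p a) (s a), Fin.snoc (q a) (t a))) :=
    hgm.comp ((measurable_snoc'.comp (hs.prodMk hp)).prodMk
      (measurable_snoc'.comp (ht.prodMk hq)))
  have e1 : volume A = ∫⁻ s : ℝ, ∫⁻ p : Fin n → ℝ, ∫⁻ t : ℝ, ∫⁻ q : Fin n → ℝ,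
      g (Fin.snoc p s, Fin.snoc q t) := by
    rw [← lintegral_indicator_one hA, Measure.volume_eq_prod,
      lintegral_prod _ hgm.aemeasurable, lintegral_snoc, Measure.volume_eq_prod, lintegral_prod]
    · refine lintegral_congr fun s => lintegral_congr fun p => ?_
      rw [lintegral_snoc, Measure.volume_eq_prod, lintegral_prod]
      refine Measurable.aemeasurable ?_
      exact hm (by fun_prop) (by fun_prop) (by fun_prop) (by fun_prop)
    · refine Measurable.aemeasurable ?_
      exact (hgm.lintegral_prod_right').comp measurable_snoc'
  rw [e1]
  have e2 : ∀ s : ℝ, ∫⁻ p : Fin n → ℝ, ∫⁻ t : ℝ, ∫⁻ q : Fin n → ℝ,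
      g (Fin.snoc p s, Fin.snoc q t) = ∫⁻ t : ℝ, ∫⁻ pq : (Fin n → ℝ) × (Fin n → ℝ),
      g (Fin.snoc pq.1 s, Fin.snoc pq.2 t) := by
    intro s
    rw [lintegral_lintegral_swap]
    · refine lintegral_congr fun t => ?_
      rw [Measure.volume_eq_prod, lintegral_prod]
      refine Measurable.aemeasurable ?_
      exact hm (by fun_prop) (by fun_prop) (by fun_prop) (by fun_prop)
    · refine Measurable.aemeasurable ?_
      refine Measurable.lintegral_prod_right' (f := fun z : ((Fin n → ℝ) × ℝ) × (Fin n → ℝ) =>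
        g (Fin.snoc z.1.1 s, Fin.snoc z.2 z.1.2)) ?_
      exact hm (by fun_prop) (by fun_prop) (by fun_prop) (by fun_prop)
  simp_rw [e2]
  rw [lintegral_lintegral_swap]
  · refine lintegral_congr fun t => lintegral_congr fun s => ?_
    rw [← lintegral_indicator_one]
    · rfl
    · refine MeasurableSet.preimage hA (f := fun pq : (Fin n → ℝ) × (Fin n → ℝ) =>
        ((Fin.snoc pq.1 s : Fin (n+1) → ℝ), (Fin.snoc pq.2 t : Fin (n+1) → ℝ))) ?_
      exact (measurable_snoc'.comp (measurable_const.prodMk measurable_fst)).prodMk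
        (measurable_snoc'.comp (measurable_const.prodMk measurable_snd))
  · refine Measurable.aemeasurable ?_
    refine Measurable.lintegral_prod_right' (f := fun z : (ℝ × ℝ) × (Fin n → ℝ) × (Fin n → ℝ) =>
        g (Fin.snoc z.2.1 z.1.1, Fin.snoc z.2.2 z.1.2)) ?_
    exact hm (by fun_prop) (by fun_prop) (by fun_prop) (by fun_prop)

lemma ftc (f H : ℝ → ℝ) (c d : ℝ) (hcd : c ≤ d) (hf : Continuous f)
    (h0 : ∀ s ∈ Set.Icc c d, 0 ≤ f s) (hH : ∀ s, HasDerivAt H (f s) s) :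
    ∫⁻ s in Set.Icc c d, ENNReal.ofReal (f s) = ENNReal.ofReal (H d - H c) := by
  rw [← intervalIntegral.integral_eq_sub_of_hasDerivAt (fun s _ => hH s)
    (hf.intervalIntegrable c d), intervalIntegral.integral_of_le hcd,
    ← integral_Icc_eq_integral_Ioc, ofReal_integral_eq_lintegral_ofReal]
  · exact hf.continuousOn.integrableOn_Icc
  · exact (ae_restrict_iff' measurableSet_Icc).2 (Filter.Eventually.of_forall h0)

def Lam (n : ℕ) (a b : ℝ) : Set ((Fin n → ℝ) × (Fin n → ℝ)) :=
  {p | Monotone p.1 ∧ Monotone p.2 ∧ (∀ i, 0 ≤ p.1 i ∧ p.1 i ≤ a) ∧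
      (∀ i, 0 ≤ p.2 i ∧ p.2 i ≤ b) ∧ (∀ i, p.2 i ≤ p.1 i)}

lemma Lam_meas (n : ℕ) (a b : ℝ) : MeasurableSet (Lam n a b) := by
  have e : Lam n a b = (Prod.fst ⁻¹' {f | Monotone f}) ∩ ((Prod.snd ⁻¹' {f | Monotone f}) ∩
      ⋂ i, ({p | 0 ≤ p.1 i} ∩ {p | p.1 i ≤ a} ∩ {p | 0 ≤ p.2 i} ∩ {p | p.2 i ≤ b} ∩
        {p | p.2 i ≤ p.1 i})) := by
    ext p
    simp only [Lam, Set.mem_ofPred_eq, Set.mem_inter_iff, Set.mem_preimage, Set.mem_iInter,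
      forall_and]
    tauto
  rw [e]
  apply IsClosed.measurableSet
  refine (isClosed_monotone.preimage continuous_fst).inter
    ((isClosed_monotone.preimage continuous_snd).inter (isClosed_iInter fun i => ?_))
  refine IsClosed.inter (IsClosed.inter (IsClosed.inter (IsClosed.inter ?_ ?_) ?_) ?_) ?_ <;>
  exact isClosed_le (by fun_prop) (by fun_prop)

lemma mono_snoc {n : ℕ} (p : Fin n → ℝ) (s : ℝ) :
    Monotone (Fin.snoc p s : Fin (n+1) → ℝ) ↔ Monotone p ∧ ∀ i, p i ≤ s := by
  constructor
  · intro h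
    refine ⟨fun i j hij => ?_, fun i => ?_⟩
    · simpa using h (Fin.castSucc_le_castSucc_iff.2 hij)
    · simpa using h (Fin.le_last i.castSucc)
  · rintro ⟨h, hs⟩ i j
    refine Fin.lastCases ?_ (fun j => ?_) j <;> refine Fin.lastCases ?_ (fun i => ?_) i
    · simp
    · simpa using fun _ => hs i
    · intro hh
      exact absurd hh (by simp [Fin.castSucc_lt_last])
    · simpa using fun hij => h hij

lemma mem_Lam_snoc {n : ℕ} (a b s t : ℝ) (p q : Fin n → ℝ) :
    ((Fin.snoc p s : Fin (n+1) → ℝ), (Fin.snoc q t : Fin (n+1) → ℝ)) ∈ Lam (n+1) a b ↔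
      (t ∈ Set.Icc 0 b ∧ s ∈ Set.Icc t a) ∧ (p, q) ∈ Lam n s t := by
  simp only [Lam, Set.mem_ofPred_eq, mono_snoc, Fin.forall_fin_succ', Fin.snoc_castSucc,
    Fin.snoc_last, Set.mem_Icc]
  constructor
  · rintro ⟨⟨h1, h2⟩, ⟨h3, h4⟩, ⟨h5, h6⟩, ⟨h7, h8⟩, h9, h10⟩
    exact ⟨⟨h8, h10, h6.2⟩, h1, h3, fun i => ⟨(h5 i).1, h2 i⟩, fun i => ⟨(h7 i).1, h4 i⟩, h9⟩
  · rintro ⟨⟨h8, h10, h6⟩, h1, h3, h5, h7, h9⟩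
    exact ⟨⟨h1, fun i => (h5 i).2⟩, ⟨h3, fun i => (h7 i).2⟩,
      ⟨fun i => ⟨(h5 i).1, (h5 i).2.trans h6⟩, h8.1.trans h10, h6⟩,
      ⟨fun i => ⟨(h7 i).1, (h7 i).2.trans h8.2⟩, h8⟩, h9, h10⟩

noncomputable def F (n : ℕ) (a b : ℝ) : ℝ :=
  a ^ n * b ^ n / (n.factorial * n.factorial) -
    n * a ^ (n-1) * b ^ (n+1) / (n.factorial * (n+1).factorial)

noncomputable def G (n : ℕ) (s t : ℝ) : ℝ :=
  (s ^ (n+1) * t ^ n - s ^ n * t ^ (n+1)) / (n.factorial * (n+1).factorial)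

lemma F_nonneg (n : ℕ) (s t : ℝ) (ht : 0 ≤ t) (hts : t ≤ s) : 0 ≤ F n s t := by
  unfold F
  rcases n with _ | n
  · simp
  have : s ^ (n+1) * t ^ (n+1) / ((n+1).factorial * (n+1).factorial) -
    (n+1 : ℕ) * s ^ (n+1-1) * t ^ (n+1+1) / ((n+1).factorial * (n+1+1).factorial)
    = s ^ n * t ^ (n+1) * ((n+1) * (s - t) + s) / ((n+1).factorial * (n+1+1).factorial) := by
    rw [Nat.factorial_succ (n+1)]
    have := Nat.factorial_pos (n+1)
    simp only [Nat.add_sub_cancel]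
    push_cast
    field_simp
    ring
  rw [this]
  have : 0 ≤ s - t := by linarith
  have : 0 ≤ s := by linarith
  positivity

lemma G_nonneg (n : ℕ) (s t : ℝ) (ht : 0 ≤ t) (hts : t ≤ s) : 0 ≤ G n s t := by
  have : G n s t = s ^ n * t ^ n * (s - t) / (n.factorial * (n+1).factorial) := by
    unfold G; ring
  rw [this]
  have : 0 ≤ s - t := by linarith
  have : 0 ≤ s := by linarith
  positivity

lemma G_deriv (n : ℕ) (s t : ℝ) : HasDerivAt (fun s => G n s t) (F n s t) s := by
  unfold G
  have := ((((hasDerivAt_pow (n+1) s).mul_const (t^n)).sub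
    ((hasDerivAt_pow n s).mul_const (t^(n+1)))).div_const
      ((n.factorial : ℝ) * (n+1).factorial))
  refine this.congr_deriv ?_
  unfold F
  rw [Nat.factorial_succ n]
  simp only [Nat.add_sub_cancel]
  push_cast
  field_simp

lemma F_deriv (n : ℕ) (a t : ℝ) : HasDerivAt (fun t => F (n+1) a t) (G n a t) t := by
  unfold F
  have := (((hasDerivAt_pow (n+1) t).const_mul (a^(n+1))).div_const
      (((n+1).factorial : ℝ) * (n+1).factorial)).sub
    (((hasDerivAt_pow (n+1+1) t).const_mul ((n+1 : ℕ) * a^(n+1-1))).div_const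
      (((n+1).factorial : ℝ) * (n+1+1).factorial))
  refine this.congr_deriv ?_
  unfold G
  rw [Nat.factorial_succ (n+1), Nat.factorial_succ n]
  simp only [Nat.add_sub_cancel]
  push_cast
  field_simp

lemma vol_Lam (n : ℕ) : ∀ a b : ℝ, 0 ≤ b → b ≤ a →
    volume (Lam n a b) = ENNReal.ofReal (F n a b) := by
  induction n with
  | zero =>
    intro a b _ _
    have : Lam 0 a b = Set.univ := by
      ext p; simp [Lam, Subsingleton.monotone]
    rw [this, Measure.volume_eq_prod, Measure.prod_apply MeasurableSet.univ]
    simp [F, volume_pi]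
  | succ n ih =>
    intro a b hb hba
    rw [key n _ (Lam_meas _ _ _)]
    have e : ∀ t s : ℝ, volume {pq : (Fin n → ℝ) × (Fin n → ℝ) |
        ((Fin.snoc pq.1 s : Fin (n+1) → ℝ), (Fin.snoc pq.2 t : Fin (n+1) → ℝ)) ∈ Lam (n+1) a b}
        = (Set.Icc 0 b).indicator (fun t => (Set.Icc t a).indicator
          (fun s => ENNReal.ofReal (F n s t)) s) t := by
      intro t s
      simp only [mem_Lam_snoc]
      by_cases h1 : t ∈ Set.Icc 0 b
      · by_cases h2 : s ∈ Set.Icc t a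
        · simp only [h1, h2, Set.indicator_of_mem, true_and, and_self]
          exact ih s t h1.1 h2.1
        · simp [h1, h2]
      · simp [h1]
    simp_rw [e]
    have e2 : ∀ t : ℝ, (∫⁻ s : ℝ, (Set.Icc 0 b).indicator (fun t => (Set.Icc t a).indicator
          (fun s => ENNReal.ofReal (F n s t)) s) t) =
        (Set.Icc 0 b).indicator (fun t => ENNReal.ofReal (G n a t)) t := by
      intro t
      by_cases h1 : t ∈ Set.Icc 0 b
      · simp only [h1, Set.indicator_of_mem]
        rw [lintegral_indicator measurableSet_Icc,
          ftc (fun s => F n s t) (fun s => G n s t) t a (h1.2.trans hba)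
            (by unfold F; fun_prop) (fun s hs => F_nonneg n s t h1.1 hs.1)
            (fun s => G_deriv n s t)]
        congr 1
        have : G n t t = 0 := by unfold G; ring
        simp [this]
      · simp [h1]
    simp_rw [e2]
    rw [lintegral_indicator measurableSet_Icc,
      ftc (fun t => G n a t) (fun t => F (n+1) a t) 0 b hb
        (by unfold G; fun_prop) (fun t ht => G_nonneg n a t ht.1 (ht.2.trans hba))
        (fun t => F_deriv n a t)]
    congr 1
    simp [F]

theorem volume_Lambda (n : ℕ) (hn : 1 ≤ n) (x y : ℝ) (hy : 0 ≤ y) (hxy : y ≤ x) :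
    volume {p : (Fin n → ℝ) × (Fin n → ℝ) |
      Monotone p.1 ∧ Monotone p.2 ∧
      (∀ i, 0 ≤ p.1 i ∧ p.1 i ≤ (x + y) / 2) ∧
      (∀ i, 0 ≤ p.2 i ∧ p.2 i ≤ (x - y) / 2) ∧
      (∀ i, p.2 i ≤ p.1 i)} =
    ENNReal.ofReal ((x - y) ^ n * (x + y) ^ (n - 1) * (x + (2 * n + 1) * y) /
      (2 ^ (2 * n) * n.factorial * (n + 1).factorial)) := by
  refine (vol_Lam n ((x+y)/2) ((x-y)/2) (by linarith) (by linarith)).trans ?_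
  congr 1
  obtain ⟨m, rfl⟩ : ∃ m, n = m + 1 := ⟨n - 1, by omega⟩
  unfold F
  rw [Nat.factorial_succ (m+1)]
  simp only [Nat.add_sub_cancel, div_pow]
  push_cast
  have h2 : (2:ℝ) ^ (2 * (m+1)) = 2 ^ m * 2 ^ m * 4 := by ring
  rw [h2]
  field_simp
  ring
end

section
/- For real numbers x, y with 0 ≤ y ≤ x and 0 < x + y, the sum Σ_{n=0}^∞ (x−y)ⁿ (x+y)^{n−1} (x + (2n+1)y) / (2^{2n} n! (n+1)!) equals I₀(√(x²−y²)) − ((x−y)/(x+y)) I₂(√(x²−y²)). -/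
/-- The modified Bessel function of the first kind of integer order `ν`. -/
noncomputable def besselI (ν : ℕ) (z : ℝ) : ℝ :=
  ∑' n : ℕ, (z / 2) ^ (2 * n + ν) / ((n.factorial : ℝ) * ((n + ν).factorial : ℝ))
theorem sum_volumes_eq_catalan (x y : ℝ) (hy : 0 ≤ y) (hxy : y ≤ x) (hpos : 0 < x + y) :
    ∑' n : ℕ, (x - y) ^ n * (x + y) ^ ((n : ℤ) - 1) * (x + (2 * n + 1) * y) /
        (2 ^ (2 * n) * (n.factorial : ℝ) * ((n + 1).factorial : ℝ)) =
      besselI 0 (Real.sqrt (x ^ 2 - y ^ 2)) -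
        ((x - y) / (x + y)) * besselI 2 (Real.sqrt (x ^ 2 - y ^ 2)) := by
  obtain ⟨w, hw⟩ : ∃ w, w = (x - y) * (x + y) / 4 := ⟨_, rfl⟩
  have hd : 0 ≤ x - y := by linarith
  have hw0 : 0 ≤ w := by rw [hw]; positivity
  have hsq : (Real.sqrt (x ^ 2 - y ^ 2) / 2) ^ 2 = w := by
    rw [div_pow, Real.sq_sqrt (by nlinarith), hw]; ring
  have hI0 : besselI 0 (Real.sqrt (x ^ 2 - y ^ 2)) =
      ∑' n : ℕ, w ^ n / ((n.factorial : ℝ) * (n.factorial : ℝ)) := by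
    unfold besselI
    refine tsum_congr fun n => ?_
    rw [add_zero, pow_mul, hsq, add_zero]
  have hI2 : besselI 2 (Real.sqrt (x ^ 2 - y ^ 2)) =
      ∑' n : ℕ, w ^ (n + 1) / ((n.factorial : ℝ) * ((n + 2).factorial : ℝ)) := by
    unfold besselI
    refine tsum_congr fun n => ?_
    rw [show 2 * n + 2 = 2 * (n + 1) by ring, pow_mul, hsq]
  have h1 : ∀ n : ℕ, (1 : ℝ) ≤ n.factorial := fun n => by
    exact_mod_cast Nat.one_le_iff_ne_zero.mpr n.factorial_ne_zero
  have hexp := Real.summable_pow_div_factorial w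
  have hA : Summable fun n : ℕ => w ^ n / ((n.factorial : ℝ) * (n.factorial : ℝ)) := by
    refine Summable.of_nonneg_of_le (fun n => by positivity) (fun n => ?_) hexp
    apply div_le_div_of_nonneg_left (by positivity) (by positivity)
    nlinarith [h1 n]
  have hB : Summable fun n : ℕ =>
      w ^ (n + 1) / ((n.factorial : ℝ) * ((n + 2).factorial : ℝ)) := by
    refine Summable.of_nonneg_of_le (fun n => by positivity) (fun n => ?_) (hexp.mul_left w)
    rw [pow_succ', ← mul_div_assoc]
    apply div_le_div_of_nonneg_left (by positivity) (by positivity)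
    nlinarith [h1 n, h1 (n + 2)]
  have hC : HasSum (fun n : ℕ => n * w ^ n / ((n.factorial : ℝ) * ((n + 1).factorial : ℝ)))
      (besselI 2 (Real.sqrt (x ^ 2 - y ^ 2))) := by
    rw [hI2, ← hasSum_nat_add_iff' 1]
    simp only [Finset.sum_range_one, Nat.cast_zero, zero_mul, zero_div, sub_zero]
    refine (congrArg (fun f => HasSum f _) ?_).mpr hB.hasSum
    funext n
    rw [Nat.factorial_succ n]
    push_cast
    have := h1 n
    have := h1 (n + 2)
    field_simp
  have hA' := hA.hasSum
  rw [← hI0] at hA'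
  rw [← (hA'.sub (hC.mul_left ((x - y) / (x + y)))).tsum_eq]
  refine tsum_congr fun n => ?_
  have hs := hpos.ne'
  rw [zpow_sub_one₀ hs, zpow_natCast, hw, div_pow, mul_pow, pow_mul, Nat.factorial_succ n]
  norm_num
  have := h1 n
  field_simp
  ring
end

section
/- For real numbers x, y with 0 ≤ y ≤ x, the continuous Catalan numbers satisfy the integral recursion C(x,y) = 1 + ∫_{b=0}^{(x−y)/2} ∫_{a=0}^{(x+y)/2 − b} C(a+2b, a) da db. -/
/-- The continuous Catalan numbers `C(x,y)` (with the convention that the quotient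
term vanishes when `x + y = 0`, since division by zero is zero in Lean). -/
noncomputable def contCatalan (x y : ℝ) : ℝ :=
  besselI 0 (Real.sqrt (x ^ 2 - y ^ 2)) -
    ((x - y) / (x + y)) * besselI 2 (Real.sqrt (x ^ 2 - y ^ 2))

noncomputable def auxH (k : ℕ) (t : ℝ) : ℝ :=
  ∑' n : ℕ, t ^ n / ((n.factorial : ℝ) * ((n + k).factorial : ℝ))

lemma auxH_summable (k : ℕ) (t : ℝ) :
    Summable (fun n : ℕ => t ^ n / ((n.factorial : ℝ) * ((n + k).factorial : ℝ))) := by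
  refine Summable.of_norm_bounded (Real.summable_pow_div_factorial |t|) (fun n => ?_)
  have h1 : (1 : ℝ) ≤ ((n + k).factorial : ℝ) := by
    exact_mod_cast Nat.one_le_iff_ne_zero.mpr (Nat.factorial_ne_zero _)
  have h2 : (0 : ℝ) < (n.factorial : ℝ) := by positivity
  rw [norm_div, norm_pow, Real.norm_eq_abs, Real.norm_of_nonneg (by positivity)]
  gcongr
  nlinarith

lemma auxH_deriv (k : ℕ) (t : ℝ) : HasDerivAt (auxH k) (auxH (k + 1) t) t := by
  have hshift : ∀ s : ℝ, ∀ n : ℕ,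
      ((n + 1 : ℕ) : ℝ) * s ^ (n + 1 - 1) / (((n + 1).factorial : ℝ) * ((n + 1 + k).factorial : ℝ))
      = s ^ n / ((n.factorial : ℝ) * ((n + (k + 1)).factorial : ℝ)) := by
    intro s n
    rw [show n + 1 + k = n + (k + 1) by ring, Nat.factorial_succ n]
    have h2 : (n.factorial : ℝ) ≠ 0 := by positivity
    have h3 : ((n + (k + 1)).factorial : ℝ) ≠ 0 := by positivity
    have h4 : (n : ℝ) + 1 ≠ 0 := by positivity
    push_cast
    field_simp
    try simp
  have hs : ∀ s : ℝ, Summable (fun n : ℕ => (n : ℝ) * s ^ (n - 1) /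
      ((n.factorial : ℝ) * ((n + k).factorial : ℝ))) := by
    intro s
    rw [← summable_nat_add_iff 1]
    refine (auxH_summable (k + 1) s).congr (fun n => ?_)
    rw [hshift]
  have key := hasDerivAt_tsum_of_isPreconnected (𝕜 := ℝ) (F := ℝ)
    (g := fun (n : ℕ) (s : ℝ) => s ^ n / ((n.factorial : ℝ) * ((n + k).factorial : ℝ)))
    (g' := fun (n : ℕ) (s : ℝ) => (n : ℝ) * s ^ (n - 1) /
      ((n.factorial : ℝ) * ((n + k).factorial : ℝ)))
    (u := fun n : ℕ => (n : ℝ) * (|t| + 1) ^ (n - 1) /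
      ((n.factorial : ℝ) * ((n + k).factorial : ℝ)))
    (t := Metric.ball (0 : ℝ) (|t| + 1)) (y₀ := t) (y := t)
    (hs _) Metric.isOpen_ball (convex_ball _ _).isPreconnected
    (fun n s _ => (hasDerivAt_pow n s).div_const _)
    (fun n s hs => by
      have : |s| ≤ |t| + 1 := by
        have := Metric.mem_ball.mp hs
        rw [Real.dist_eq, sub_zero] at this
        exact this.le
      rw [norm_div, norm_mul, norm_pow, Real.norm_eq_abs s,
        Real.norm_of_nonneg (by positivity : (0:ℝ) ≤ (n.factorial : ℝ) * ((n + k).factorial : ℝ)),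
        Real.norm_of_nonneg (by positivity : (0:ℝ) ≤ (n : ℝ))]
      gcongr)
    (by simp) (auxH_summable k t) (by simp)
  refine key.congr_deriv ?_
  rw [(hs t).tsum_eq_zero_add]
  simp only [hshift]
  simp [auxH]

lemma auxH_rec (k : ℕ) (t : ℝ) :
    auxH k t = (k + 1) * auxH (k + 1) t + t * auxH (k + 2) t := by
  have e : t * auxH (k + 2) t = ∑' n : ℕ, (n : ℝ) * t ^ n /
      ((n.factorial : ℝ) * ((n + (k + 1)).factorial : ℝ)) := by
    have hsh : ∀ n : ℕ, ((n + 1 : ℕ) : ℝ) * t ^ (n + 1) /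
      (((n + 1).factorial : ℝ) * ((n + 1 + (k + 1)).factorial : ℝ))
      = t * (t ^ n / ((n.factorial : ℝ) * ((n + (k + 2)).factorial : ℝ))) := by
      intro n
      rw [show n + 1 + (k + 1) = n + (k + 2) by ring, Nat.factorial_succ n]
      have h2 : (n.factorial : ℝ) ≠ 0 := by positivity
      have h3 : ((n + (k + 2)).factorial : ℝ) ≠ 0 := by positivity
      have h4 : (n : ℝ) + 1 ≠ 0 := by positivity
      push_cast
      field_simp
      ring
    rw [Summable.tsum_eq_zero_add]
    · simp only [hsh]
      simp [auxH, tsum_mul_left]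
    · rw [← summable_nat_add_iff 1]
      exact ((auxH_summable (k + 2) t).mul_left t).congr (fun n => (hsh n).symm)
  have hterm : ∀ n : ℕ, (n : ℝ) * t ^ n / ((n.factorial : ℝ) * ((n + (k + 1)).factorial : ℝ))
      = t ^ n / ((n.factorial : ℝ) * ((n + k).factorial : ℝ))
      - (k + 1) * (t ^ n / ((n.factorial : ℝ) * ((n + (k + 1)).factorial : ℝ))) := by
    intro n
    rw [show n + (k + 1) = (n + k) + 1 by ring, Nat.factorial_succ (n + k)]
    have h2 : (n.factorial : ℝ) ≠ 0 := by positivity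
    have h3 : ((n + k).factorial : ℝ) ≠ 0 := by positivity
    have h4 : (n : ℝ) + k + 1 ≠ 0 := by positivity
    push_cast
    field_simp
    ring
  rw [e]
  simp only [hterm]
  rw [Summable.tsum_sub (auxH_summable k t) ((auxH_summable (k + 1) t).mul_left _), tsum_mul_left]
  simp only [auxH]
  ring

lemma auxH_cont (k : ℕ) : Continuous (auxH k) :=
  continuous_iff_continuousAt.mpr fun t => (auxH_deriv k t).continuousAt

lemma auxH_zero (t : ℝ) (ht : t = 0) : auxH 0 t = 1 := by
  subst ht
  rw [auxH, tsum_eq_single 0]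
  · simp
  · intro n hn
    simp [hn]

lemma besselI_eq (k : ℕ) (z : ℝ) : besselI k z = (z / 2) ^ k * auxH k ((z / 2) ^ 2) := by
  rw [besselI, auxH, ← tsum_mul_left]
  congr 1
  ext n
  rw [← pow_mul, pow_add]
  ring

noncomputable def auxD (p q : ℝ) : ℝ := auxH 0 (p * q) - q ^ 2 * auxH 2 (p * q)

lemma contCatalan_eq (a b : ℝ) (ha : 0 ≤ a) (hb : 0 ≤ b) :
    contCatalan (a + 2 * b) a = auxD (a + b) b := by
  have h4 : (a + 2 * b) ^ 2 - a ^ 2 = 4 * ((a + b) * b) := by ring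
  have h : (√((a + 2 * b) ^ 2 - a ^ 2) / 2) ^ 2 = (a + b) * b := by
    rw [div_pow, Real.sq_sqrt (by rw [h4]; positivity), h4]; ring
  rw [contCatalan, besselI_eq, besselI_eq, h, auxD, ← mul_assoc]
  congr 1
  · simp
  · congr 1
    rcases (add_nonneg ha hb).eq_or_lt with h0 | h0
    · have : b = 0 := by linarith
      subst this
      simp
    · have : a + 2 * b + a ≠ 0 := by linarith
      rw [div_mul_eq_mul_div, div_eq_iff this]
      ring

lemma auxD_deriv_right (p q : ℝ) :
    HasDerivAt (fun q => auxD p q) ((p - q) * auxH 1 (p * q)) q := by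
  have hm : HasDerivAt (fun q : ℝ => p * q) p q := by
    simpa using (hasDerivAt_id q).const_mul p
  have h0 := (auxH_deriv 0 (p * q)).comp q hm
  have h2 := (auxH_deriv 2 (p * q)).comp q hm
  have := h0.sub (((hasDerivAt_id q).pow 2).mul h2)
  refine this.congr_deriv ?_
  have r := auxH_rec 1 (p * q)
  simp at r ⊢
  norm_num at r
  linear_combination q * r

lemma auxE_deriv (p q : ℝ) :
    HasDerivAt (fun p => (p - q) * auxH 1 (p * q)) (auxD p q) p := by
  have hm : HasDerivAt (fun p : ℝ => p * q) q p := by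
    simpa using (hasDerivAt_id p).mul_const q
  have h1 := (auxH_deriv 1 (p * q)).comp p hm
  have := ((hasDerivAt_id p).sub_const q).mul h1
  refine this.congr_deriv ?_
  have r := auxH_rec 0 (p * q)
  simp [auxD] at r ⊢
  linear_combination (-1) * r

theorem contCatalan_recursion (x y : ℝ) (hy : 0 ≤ y) (hxy : y ≤ x) :
    contCatalan x y =
      1 + ∫ b in (0 : ℝ)..(x - y) / 2, ∫ a in (0 : ℝ)..((x + y) / 2 - b),
        contCatalan (a + 2 * b) a := by
  have hq : 0 ≤ (x - y) / 2 := by linarith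
  have inner : ∀ b ∈ Set.uIcc (0 : ℝ) ((x - y) / 2),
      (∫ a in (0 : ℝ)..((x + y) / 2 - b), contCatalan (a + 2 * b) a)
        = ((x + y) / 2 - b) * auxH 1 ((x + y) / 2 * b) := by
    intro b hb
    rw [Set.uIcc_of_le hq] at hb
    have hle : 0 ≤ (x + y) / 2 - b := by linarith [hb.2]
    have e : (∫ a in (0 : ℝ)..((x + y) / 2 - b), contCatalan (a + 2 * b) a)
        = ∫ a in (0 : ℝ)..((x + y) / 2 - b), auxD (a + b) b := by
      refine intervalIntegral.integral_congr (fun a ha => ?_)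
      rw [Set.uIcc_of_le hle] at ha
      exact contCatalan_eq a b ha.1 hb.1
    rw [e, intervalIntegral.integral_comp_add_right (fun p => auxD p b),
      intervalIntegral.integral_eq_sub_of_hasDerivAt (fun p _ => auxE_deriv p b)]
    · simp
    · apply Continuous.intervalIntegrable
      unfold auxD
      have := auxH_cont 0
      have := auxH_cont 2
      fun_prop
  rw [intervalIntegral.integral_congr inner,
    intervalIntegral.integral_eq_sub_of_hasDerivAt
      (fun q _ => auxD_deriv_right ((x + y) / 2) q)]
  · have := contCatalan_eq y ((x - y) / 2) hy hq
    rw [show y + 2 * ((x - y) / 2) = x by ring,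
      show y + (x - y) / 2 = (x + y) / 2 by ring] at this
    rw [this]
    have h0 : auxD ((x + y) / 2) 0 = 1 := by simp [auxD, auxH_zero]
    rw [h0]; ring
  · apply Continuous.intervalIntegrable
    have := auxH_cont 1
    fun_prop
end

section
/- For every real number x with 0 ≤ x < 1/4, one has ∫_{0}^{∞} C(2√x · u) e^{−u} du = 2 / (1 + √(1 − 4x)); equivalently, this integral equals the value Σ_{n=0}^∞ Cₙ xⁿ of the Catalan number generating function, where Cₙ is the n-th Catalan number. -/
/-- The one-variable continuous Catalan function `C(x) = 2 I₁(x)/x`. -/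
noncomputable def contCatalanFn (x : ℝ) : ℝ :=
  ∑' n : ℕ, (x / 2) ^ (2 * n) / ((n.factorial : ℝ) * ((n + 1).factorial : ℝ))

lemma aux_partial (N : ℕ) : ∑ n ∈ Finset.range N, (catalan n : ℝ) * (1/4) ^ n
    = 2 - 2 * (Nat.centralBinom N : ℝ) * (1/4) ^ N := by
  induction N with
  | zero => simp
  | succ N ih =>
    rw [Finset.sum_range_succ, ih]
    have h1 : ((N : ℝ) + 1) * catalan N = Nat.centralBinom N := by
      exact_mod_cast succ_mul_catalan_eq_centralBinom N
    have h2 : ((N : ℝ) + 1) * Nat.centralBinom (N + 1)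
        = 2 * (2 * N + 1) * Nat.centralBinom N := by
      exact_mod_cast Nat.succ_mul_centralBinom_succ N
    have h3 : (N : ℝ) + 1 ≠ 0 := by positivity
    have h4 : (Nat.centralBinom (N+1) : ℝ) = 2 * (2 * N + 1) * catalan N := by
      apply mul_left_cancel₀ h3
      rw [h2, ← h1]; ring
    rw [h4, ← h1, pow_succ]; ring

lemma aux_le (x : ℝ) (hx : 0 ≤ x) (hx' : x < 1 / 4) (N : ℕ) :
    ∑ n ∈ Finset.range N, (catalan n : ℝ) * x ^ n ≤ 2 := by
  calc _ ≤ ∑ n ∈ Finset.range N, (catalan n : ℝ) * (1/4) ^ n := by gcongr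
    _ ≤ 2 := by
      rw [aux_partial]
      have : 0 ≤ 2 * (Nat.centralBinom N : ℝ) * (1/4) ^ N := by positivity
      linarith

lemma aux_summable (x : ℝ) (hx : 0 ≤ x) (hx' : x < 1 / 4) :
    Summable fun n : ℕ => (catalan n : ℝ) * x ^ n :=
  summable_of_sum_range_le (fun n => by positivity) (aux_le x hx hx')

lemma aux_gf (x : ℝ) (hx : 0 ≤ x) (hx' : x < 1 / 4) :
    ∑' n : ℕ, (catalan n : ℝ) * x ^ n = 2 / (1 + Real.sqrt (1 - 4 * x)) := by
  have hs := aux_summable x hx hx'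
  have hle : ∑' n : ℕ, (catalan n : ℝ) * x ^ n ≤ 2 :=
    Real.tsum_le_of_sum_range_le (fun n => by positivity) (aux_le x hx hx')
  have hfe : ∑' n : ℕ, (catalan n : ℝ) * x ^ n
      = 1 + x * ((∑' n : ℕ, (catalan n : ℝ) * x ^ n) * ∑' n : ℕ, (catalan n : ℝ) * x ^ n) := by
    conv_lhs => rw [hs.tsum_eq_zero_add]
    rw [tsum_mul_tsum_eq_tsum_sum_antidiagonal_of_summable_norm hs.norm hs.norm, ← tsum_mul_left]
    simp only [catalan_zero, Nat.cast_one, pow_zero, mul_one]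
    congr 1
    refine tsum_congr fun n => ?_
    rw [catalan_succ', Nat.cast_sum, Finset.sum_mul, Finset.mul_sum]
    refine Finset.sum_congr rfl fun p hp => ?_
    rw [← Finset.HasAntidiagonal.mem_antidiagonal.1 hp]
    push_cast
    ring
  set S := ∑' n : ℕ, (catalan n : ℝ) * x ^ n
  have h : Real.sqrt (1 - 4 * x) = 1 - 2 * x * S := by
    rw [Real.sqrt_eq_iff_mul_self_eq (by linarith) (by nlinarith)]
    linear_combination 4 * x * hfe
  have h0 := Real.sqrt_nonneg (1 - 4 * x)
  rw [eq_div_iff (by positivity), h]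
  linear_combination 2 * hfe

lemma aux_int (n : ℕ) :
    MeasureTheory.IntegrableOn (fun u : ℝ => u ^ n * Real.exp (-u)) (Set.Ioi 0) ∧
    ∫ u in Set.Ioi (0 : ℝ), u ^ n * Real.exp (-u) = n.factorial := by
  have e : ∀ u : ℝ, Real.exp (-u) * u ^ (((n : ℝ) + 1) - 1) = u ^ n * Real.exp (-u) := by
    intro u; rw [add_sub_cancel_right, Real.rpow_natCast, mul_comm]
  constructor
  · have := Real.GammaIntegral_convergent (s := (n : ℝ) + 1) (by positivity)
    simpa only [e] using this
  · have := Real.Gamma_eq_integral (s := (n : ℝ) + 1) (by positivity)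
    simp only [e] at this
    rw [← this, Real.Gamma_nat_eq_factorial]

theorem laplace_contCatalanFn_eq_catalan_gf (x : ℝ) (hx : 0 ≤ x) (hx' : x < 1 / 4) :
    (∫ u in Set.Ioi (0 : ℝ), contCatalanFn (2 * Real.sqrt x * u) * Real.exp (-u)) =
        2 / (1 + Real.sqrt (1 - 4 * x)) ∧
      (∫ u in Set.Ioi (0 : ℝ), contCatalanFn (2 * Real.sqrt x * u) * Real.exp (-u)) =
        ∑' n : ℕ, (catalan n : ℝ) * x ^ n := by
  rw [← aux_gf x hx hx', and_self]
  let F : ℕ → ℝ → ℝ := fun n u =>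
    (x ^ n / ((n.factorial : ℝ) * ((n + 1).factorial : ℝ))) * (u ^ (2 * n) * Real.exp (-u))
  have hF : ∀ u, contCatalanFn (2 * Real.sqrt x * u) * Real.exp (-u) = ∑' n, F n u := by
    intro u
    rw [contCatalanFn, ← tsum_mul_right]
    refine tsum_congr fun n => ?_
    have : (2 * Real.sqrt x * u / 2) ^ (2 * n) = x ^ n * u ^ (2 * n) := by
      rw [show 2 * Real.sqrt x * u / 2 = Real.sqrt x * u by ring, mul_pow, pow_mul (Real.sqrt x),
        Real.sq_sqrt hx]
    rw [this]; simp only [F]; ring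
  have hint : ∀ n, ∫ u in Set.Ioi (0 : ℝ), F n u = (catalan n : ℝ) * x ^ n := by
    intro n
    simp only [F]
    rw [MeasureTheory.integral_const_mul, (aux_int (2 * n)).2]
    have h1 : ((n : ℝ) + 1) * catalan n = Nat.centralBinom n := by
      exact_mod_cast succ_mul_catalan_eq_centralBinom n
    have h2 : (Nat.centralBinom n : ℝ) * n.factorial * n.factorial = (2 * n).factorial := by
      have := Nat.choose_mul_factorial_mul_factorial (n := 2 * n) (k := n) (by omega)
      rw [show 2 * n - n = n by omega] at this
      exact_mod_cast this
    rw [← h2, ← h1, Nat.factorial_succ]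
    push_cast
    field_simp
  simp only [hF]
  have hsum := MeasureTheory.hasSum_integral_of_summable_integral_norm
    (μ := MeasureTheory.volume.restrict (Set.Ioi (0 : ℝ))) (F := F)
    (fun n => (aux_int (2 * n)).1.const_mul _) (by
      have hn : ∀ n u, ‖F n u‖ = F n u := by
        intro n u
        apply Real.norm_of_nonneg
        have : 0 ≤ u ^ (2 * n) := by rw [pow_mul]; positivity
        simp only [F]
        positivity
      simp only [hn, hint]
      exact aux_summable x hx hx')
  simp only [hint] at hsum
  exact hsum.tsum_eq.symm
end

section
/- For every real number s > 1, the Laplace transform of the continuous Catalan function satisfies ∫_{0}^{∞} C(x) e^{−xs} dx = 2 / (s + √(s² − 1)). -/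
lemma cat_telescope (n : ℕ) : ((catalan n : ℝ)) * (1/4)^n =
    2 * (Nat.centralBinom n : ℝ) * (1/4)^n - 2 * (Nat.centralBinom (n+1) : ℝ) * (1/4)^(n+1) := by
  have h1 : ((n:ℝ)+1) * catalan n = Nat.centralBinom n := by
    exact_mod_cast succ_mul_catalan_eq_centralBinom n
  have h2 : ((n:ℝ)+1) * Nat.centralBinom (n+1) = 2 * (2*n+1) * Nat.centralBinom n := by
    exact_mod_cast Nat.succ_mul_centralBinom_succ n
  have hn : ((n:ℝ)+1) ≠ 0 := by positivity
  apply mul_left_cancel₀ hn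
  rw [pow_succ]
  linear_combination (1/4)^n * h1 + (1/4)^n * h2 / 2

lemma cat_partial (N : ℕ) : ∑ n ∈ Finset.range N, ((catalan n : ℝ)) * (1/4)^n ≤ 2 := by
  have : ∑ n ∈ Finset.range N, ((catalan n : ℝ)) * (1/4)^n =
      2 - 2 * (Nat.centralBinom N : ℝ) * (1/4)^N := by
    induction N with
    | zero => simp
    | succ k ih => rw [Finset.sum_range_succ, ih, cat_telescope]; ring
  rw [this]
  have : 0 ≤ 2 * (Nat.centralBinom N : ℝ) * (1/4)^N := by positivity
  linarith

lemma cat_partial' (y : ℝ) (h0 : 0 ≤ y) (h1 : y ≤ 1/4) (N : ℕ) :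
    ∑ n ∈ Finset.range N, ((catalan n : ℝ)) * y^n ≤ 2 := by
  refine le_trans (Finset.sum_le_sum fun n _ => ?_) (cat_partial N)
  gcongr

lemma cat_summable (y : ℝ) (h0 : 0 ≤ y) (h1 : y ≤ 1/4) :
    Summable fun n : ℕ => ((catalan n : ℝ)) * y^n :=
  summable_of_sum_range_le (fun n => by positivity) (cat_partial' y h0 h1)

lemma cat_le (y : ℝ) (h0 : 0 ≤ y) (h1 : y ≤ 1/4) :
    ∑' n : ℕ, ((catalan n : ℝ)) * y^n ≤ 2 :=
  Real.tsum_le_of_sum_range_le (fun n => by positivity) (cat_partial' y h0 h1)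

lemma cat_quad (y : ℝ) (h0 : 0 ≤ y) (h1 : y ≤ 1/4) :
    ∑' n : ℕ, ((catalan n : ℝ)) * y^n = 1 + y * (∑' n : ℕ, ((catalan n : ℝ)) * y^n)^2 := by
  have hS := cat_summable y h0 h1
  have hN : Summable fun n : ℕ => ‖((catalan n : ℝ)) * y^n‖ := hS.norm
  have hm := tsum_mul_tsum_eq_tsum_sum_antidiagonal_of_summable_norm hN hN
  rw [sq, hm, hS.tsum_eq_zero_add, ← tsum_mul_left]
  congr 1
  · simp
  · congr 1
    funext n
    rw [catalan_succ']
    push_cast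
    rw [Finset.sum_mul, Finset.mul_sum]
    refine Finset.sum_congr rfl fun p hp => ?_
    rw [← Finset.HasAntidiagonal.mem_antidiagonal.1 hp]
    ring

lemma integral_pow_exp (s : ℝ) (hs : 0 < s) (n : ℕ) :
    ∫ x in Set.Ioi (0:ℝ), x^n * Real.exp (-(x*s)) = (n.factorial : ℝ) / s^(n+1) := by
  have h := Real.integral_rpow_mul_exp_neg_mul_Ioi (a := (n:ℝ)+1) (r := s) (by positivity) hs
  rw [Real.Gamma_nat_eq_factorial] at h
  have e : ((1/s)^((n:ℝ)+1) : ℝ) = (1/s)^(n+1) := by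
    exact_mod_cast Real.rpow_natCast (1/s) (n+1)
  rw [e] at h
  simp only [add_sub_cancel_right, Real.rpow_natCast] at h
  simp only [mul_comm _ s]
  rw [h, one_div, inv_pow]
  field_simp

lemma integrable_pow_exp (s : ℝ) (hs : 0 < s) (n : ℕ) :
    MeasureTheory.IntegrableOn (fun x : ℝ => x^n * Real.exp (-(x*s))) (Set.Ioi 0) := by
  by_contra hc
  have h := integral_pow_exp s hs n
  rw [MeasureTheory.integral_undef hc] at h
  have : 0 < (n.factorial : ℝ) / s^(n+1) := by positivity
  linarith

lemma cat_coeff (n : ℕ) : (((2*n).factorial : ℝ)) / ((n.factorial : ℝ) * ((n + 1).factorial : ℝ))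
    = catalan n := by
  have h1 : ((n:ℝ)+1) * catalan n = Nat.centralBinom n := by
    exact_mod_cast succ_mul_catalan_eq_centralBinom n
  have h2 : (Nat.centralBinom n : ℝ) * n.factorial * n.factorial = (2*n).factorial := by
    have := Nat.choose_mul_factorial_mul_factorial (n := 2*n) (k := n) (by omega)
    rw [show 2*n - n = n by omega] at this
    exact_mod_cast this
  rw [← h2, ← h1, Nat.factorial_succ]
  push_cast
  have : (n.factorial : ℝ) ≠ 0 := by positivity
  field_simp

theorem laplace_contCatalanFn (s : ℝ) (hs : 1 < s) :
    (∫ x in Set.Ioi (0 : ℝ), contCatalanFn x * Real.exp (-(x * s))) =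
      2 / (s + Real.sqrt (s ^ 2 - 1)) := by
  have hs0 : 0 < s := by linarith
  set y : ℝ := 1 / (4 * s^2) with hy
  have hy0 : 0 ≤ y := by positivity
  have hy1 : y ≤ 1/4 := by
    rw [hy]
    apply one_div_le_one_div_of_le <;> nlinarith
  let F : ℕ → ℝ → ℝ := fun n x =>
    (x / 2) ^ (2 * n) / ((n.factorial : ℝ) * ((n + 1).factorial : ℝ)) * Real.exp (-(x * s))
  have hF : ∀ n, F n = fun x => (1 / 4^n / ((n.factorial : ℝ) * ((n + 1).factorial : ℝ))) *
      (x^(2*n) * Real.exp (-(x*s))) := by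
    intro n
    funext x
    simp only [F, div_pow, pow_mul (2:ℝ)]
    norm_num
    ring
  have hint : ∀ n, MeasureTheory.Integrable (F n)
      (MeasureTheory.volume.restrict (Set.Ioi (0:ℝ))) := by
    intro n
    rw [hF]
    exact (integrable_pow_exp s hs0 (2*n)).const_mul _
  have hval : ∀ n, ∫ x in Set.Ioi (0:ℝ), F n x = (catalan n : ℝ) * y^n * (1/s) := by
    intro n
    rw [hF, MeasureTheory.integral_const_mul, integral_pow_exp s hs0, ← cat_coeff, hy, div_pow, one_pow,
      mul_pow, pow_succ, pow_mul s]
    field_simp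
  have hnn : ∀ n x, 0 ≤ F n x := by
    intro n x
    have : 0 ≤ (x/2)^(2*n) := by rw [pow_mul]; positivity
    simp only [F]
    positivity
  have hsum : Summable fun n => ∫ x in Set.Ioi (0:ℝ), ‖F n x‖ := by
    simp only [Real.norm_of_nonneg (hnn _ _), hval]
    exact (cat_summable y hy0 hy1).mul_right _
  have key := MeasureTheory.integral_tsum_of_summable_integral_norm hint hsum
  have e : ∀ x, ∑' n, F n x = contCatalanFn x * Real.exp (-(x*s)) := by
    intro x
    simp only [F, contCatalanFn]
    rw [tsum_mul_right]
  simp only [e, hval] at key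
  rw [← key, tsum_mul_right]
  have hq := cat_quad y hy0 hy1
  have hl := cat_le y hy0 hy1
  set G := ∑' n : ℕ, ((catalan n : ℝ)) * y^n
  set r := Real.sqrt (s^2 - 1) with hr
  have hr0 : 0 ≤ r := Real.sqrt_nonneg _
  have hr2 : r^2 = s^2 - 1 := Real.sq_sqrt (by nlinarith)
  have hq' : 4 * s^2 * (G - 1) = G^2 := by
    have : 4 * s^2 * y = 1 := by rw [hy]; field_simp
    linear_combination 4 * s^2 * hq + G^2 * this
  have hG : 2 * s^2 - G = 2 * s * r := by
    have h1 : 0 ≤ 2 * s^2 - G := by nlinarith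
    have h2 : 0 ≤ 2 * s * r := by positivity
    refine (sq_eq_sq₀ h1 h2).1 ?_
    linear_combination -hq' - 4 * s^2 * hr2
  have hG' : G = 2 * s^2 - 2 * s * r := by linarith
  have : s + r ≠ 0 := by positivity
  rw [hG']
  field_simp
  linear_combination -hr2
end

section
/- For real numbers x, y with 0 ≤ y ≤ x and 0 < x + y, the continuous Catalan numbers admit the integral representation C(x,y) = (1/π) ∫_{0}^{π} e^{x cos t} [ cos(y sin t) − ((x−y)/(x+y))² cos(y sin t − 2t) ] dt. -/
theorem aux_cv {ι : Type} {f g : ι → ℝ} {s t : ℝ} (h : HasSum g t) (hf : ∀ p, f p = g p)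
    (hs : s = t) : HasSum f s := by
  obtain rfl : f = g := funext hf
  rwa [hs]
theorem aux_exp (z : ℂ) : HasSum (fun n : ℕ => z ^ n / (n.factorial : ℂ)) (Complex.exp z) := by
  rw [Complex.exp_eq_exp_ℂ]
  exact NormedSpace.expSeries_div_hasSum_exp z

theorem aux_exp_norm (z : ℂ) : Summable (fun n : ℕ => ‖z ^ n / (n.factorial : ℂ)‖) :=
  NormedSpace.norm_expSeries_div_summable z

theorem aux_prod (z w u : ℂ) :
    HasSum (fun p : ℕ × ℕ =>
      (z ^ p.1 / (p.1.factorial : ℂ) * (w ^ p.2 / (p.2.factorial : ℂ)) * u).re)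
      (Complex.exp z * Complex.exp w * u).re := by
  have h0 : Summable (fun p : ℕ × ℕ =>
      (z ^ p.1 / (p.1.factorial : ℂ) * (w ^ p.2 / (p.2.factorial : ℂ)))) :=
    summable_mul_of_summable_norm (f := fun n : ℕ => z ^ n / (n.factorial : ℂ))
      (g := fun n : ℕ => w ^ n / (n.factorial : ℂ)) (aux_exp_norm z) (aux_exp_norm w)
  have h3 := (aux_exp z).mul (aux_exp w) h0
  exact Complex.hasSum_re (h3.mul_right u)

theorem aux_pointwise (a b t : ℝ) (j : ℕ) :
    HasSum (fun p : ℕ × ℕ => (a ^ p.1 / (p.1.factorial : ℝ) * (b ^ p.2 / (p.2.factorial : ℝ))) *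
      Real.cos (((p.1 : ℝ) - p.2 - j) * t))
      (Real.exp ((a + b) * Real.cos t) * Real.cos ((a - b) * Real.sin t - j * t)) := by
  obtain ⟨w, hw⟩ : ∃ w : ℂ, w = Complex.exp (t * Complex.I) := ⟨_, rfl⟩
  obtain ⟨v, hv⟩ : ∃ v : ℂ, v = Complex.exp (-(t * Complex.I)) := ⟨_, rfl⟩
  obtain ⟨u, hu⟩ : ∃ u : ℂ, u = Complex.exp (-(j * (t * Complex.I))) := ⟨_, rfl⟩
  have h4 := aux_prod ((a : ℂ) * w) ((b : ℂ) * v) u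
  refine aux_cv h4 (fun p => ?_) ?_
  · have : (((a : ℂ) * w) ^ p.1 / (p.1.factorial : ℂ)) * (((b : ℂ) * v) ^ p.2 / (p.2.factorial : ℂ)) * u
        = ((a ^ p.1 / (p.1.factorial : ℝ) * (b ^ p.2 / (p.2.factorial : ℝ)) : ℝ) : ℂ) *
          Complex.exp (((((p.1 : ℝ) - p.2 - j) * t : ℝ) : ℂ) * Complex.I) := by
      have e : Complex.exp (((((p.1 : ℝ) - p.2 - j) * t : ℝ) : ℂ) * Complex.I) = w ^ p.1 * v ^ p.2 * u := by
        rw [hw, hv, hu, ← Complex.exp_nat_mul, ← Complex.exp_nat_mul, ← Complex.exp_add,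
          ← Complex.exp_add]
        congr 1
        push_cast
        ring
      rw [e, mul_pow, mul_pow]
      push_cast
      ring
    rw [this, Complex.re_ofReal_mul, Complex.exp_ofReal_mul_I_re]
  · have : Complex.exp ((a : ℂ) * w) * Complex.exp ((b : ℂ) * v) * u =
        Complex.exp ((((a + b) * Real.cos t : ℝ) : ℂ) +
          (((a - b) * Real.sin t - j * t : ℝ) : ℂ) * Complex.I) := by
      rw [hu, ← Complex.exp_add, ← Complex.exp_add]
      congr 1
      rw [hw, hv, ← neg_mul, Complex.exp_mul_I, Complex.exp_mul_I, Complex.cos_neg, Complex.sin_neg]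
      push_cast
      ring
    rw [this, Complex.exp_re]
    simp only [Complex.add_re, Complex.add_im, Complex.ofReal_re, Complex.ofReal_im,
      Complex.re_ofReal_mul, Complex.im_ofReal_mul, Complex.I_re, Complex.I_im, mul_zero, mul_one,
      add_zero, zero_add]

theorem aux_int_s6 (n : ℤ) :
    ∫ t in (0 : ℝ)..Real.pi, Real.cos ((n : ℝ) * t) = if n = 0 then Real.pi else 0 := by
  split_ifs with h
  · simp [h]
  · have h' : (n : ℝ) ≠ 0 := by exact_mod_cast h
    rw [intervalIntegral.integral_comp_mul_left (fun t => Real.cos t) h', integral_cos]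
    simp [Real.sin_int_mul_pi]

theorem aux_series (a b : ℝ) (ha : 0 ≤ a) (hb : 0 ≤ b) (j : ℕ) :
    HasSum (fun n : ℕ => a ^ (n + j) / ((n + j).factorial : ℝ) * (b ^ n / (n.factorial : ℝ)))
      ((1 / Real.pi) * ∫ t in (0 : ℝ)..Real.pi,
        Real.exp ((a + b) * Real.cos t) * Real.cos ((a - b) * Real.sin t - j * t)) := by
  have hs : Summable (fun p : ℕ × ℕ =>
      a ^ p.1 / (p.1.factorial : ℝ) * (b ^ p.2 / (p.2.factorial : ℝ))) :=
    (Real.summable_pow_div_factorial a).mul_of_nonneg (Real.summable_pow_div_factorial b)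
      (fun n => by positivity) (fun n => by positivity)
  have H := intervalIntegral.hasSum_integral_of_dominated_convergence
    (μ := MeasureTheory.volume) (a := 0) (b := Real.pi)
    (F := fun (p : ℕ × ℕ) (t : ℝ) =>
      (a ^ p.1 / (p.1.factorial : ℝ) * (b ^ p.2 / (p.2.factorial : ℝ))) *
      Real.cos (((p.1 : ℝ) - p.2 - j) * t))
    (f := fun t => Real.exp ((a + b) * Real.cos t) * Real.cos ((a - b) * Real.sin t - j * t))
    (fun p _ => a ^ p.1 / (p.1.factorial : ℝ) * (b ^ p.2 / (p.2.factorial : ℝ)))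
    (fun p => (by fun_prop : Continuous _).aestronglyMeasurable)
    (fun p => Filter.Eventually.of_forall fun t _ => by
      rw [norm_mul, Real.norm_of_nonneg (by positivity)]
      exact mul_le_of_le_one_right (by positivity) (Real.abs_cos_le_one _))
    (Filter.Eventually.of_forall fun t _ => hs)
    (by simp)
    (Filter.Eventually.of_forall fun t _ => aux_pointwise a b t j)
  have H2 := H.mul_left (1 / Real.pi)
  have hinj : Function.Injective (fun n : ℕ => ((n + j, n) : ℕ × ℕ)) := by
    intro m n h
    simpa using congrArg Prod.snd h
  have key : ∀ p : ℕ × ℕ, (∫ t in (0 : ℝ)..Real.pi,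
      (a ^ p.1 / (p.1.factorial : ℝ) * (b ^ p.2 / (p.2.factorial : ℝ))) *
      Real.cos (((p.1 : ℝ) - p.2 - j) * t)) =
      (a ^ p.1 / (p.1.factorial : ℝ) * (b ^ p.2 / (p.2.factorial : ℝ))) *
        (if (p.1 : ℤ) - p.2 - j = 0 then Real.pi else 0) := by
    intro p
    rw [intervalIntegral.integral_const_mul, ← aux_int_s6]
    push_cast
    rfl
  simp only [key] at H2
  rw [← hinj.hasSum_iff] at H2
  · refine aux_cv H2 (fun n => ?_) rfl
    have := Real.pi_ne_zero
    simp
    field_simp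
  · intro p hp
    have : (p.1 : ℤ) - p.2 - j ≠ 0 := by
      intro h
      apply hp
      exact ⟨p.2, Prod.ext (by simp only; omega) rfl⟩
    simp [this]

theorem contCatalan_integral_rep (x y : ℝ) (hy : 0 ≤ y) (hxy : y ≤ x) (hpos : 0 < x + y) :
    contCatalan x y =
      (1 / Real.pi) * ∫ t in (0 : ℝ)..Real.pi,
        Real.exp (x * Real.cos t) *
          (Real.cos (y * Real.sin t) -
            ((x - y) / (x + y)) ^ 2 * Real.cos (y * Real.sin t - 2 * t)) := by
  set a := (x + y) / 2 with ha
  set b := (x - y) / 2 with hb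
  have ha0 : 0 < a := by rw [ha]; linarith
  have hb0 : 0 ≤ b := by rw [hb]; linarith
  have hab : a + b = x := by rw [ha, hb]; ring
  have hab' : a - b = y := by rw [ha, hb]; ring
  have hr : (x - y) / (x + y) = b / a := by
    rw [ha, hb]; field_simp
  have hsq : (Real.sqrt (x ^ 2 - y ^ 2) / 2) ^ 2 = a * b := by
    rw [div_pow, Real.sq_sqrt (by nlinarith), ha, hb]; ring
  have s0 := aux_series a b ha0.le hb0 0
  have s2 := aux_series a b ha0.le hb0 2
  rw [hab, hab'] at s0 s2
  have i0 : besselI 0 (Real.sqrt (x ^ 2 - y ^ 2)) =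
      ∑' n : ℕ, a ^ (n + 0) / ((n + 0).factorial : ℝ) * (b ^ n / (n.factorial : ℝ)) := by
    unfold besselI
    congr 1
    funext n
    rw [add_zero, add_zero, pow_mul, hsq, mul_pow]
    field_simp
  have i2 : b / a * besselI 2 (Real.sqrt (x ^ 2 - y ^ 2)) = (b / a) ^ 2 *
      ∑' n : ℕ, a ^ (n + 2) / ((n + 2).factorial : ℝ) * (b ^ n / (n.factorial : ℝ)) := by
    rw [← tsum_mul_left]
    unfold besselI
    rw [← tsum_mul_left]
    congr 1
    funext n
    rw [show 2 * n + 2 = 2 * (n + 1) by ring, pow_mul, hsq, mul_pow]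
    field_simp
    ring
  unfold contCatalan
  rw [hr, i0, i2, s0.tsum_eq, s2.tsum_eq, mul_left_comm, ← mul_sub, ← intervalIntegral.integral_const_mul,
    ← intervalIntegral.integral_sub]
  · congr 1
    apply intervalIntegral.integral_congr
    intro t _
    simp only [Nat.cast_zero, zero_mul, sub_zero, Nat.cast_ofNat]
    ring
  · exact (by fun_prop : Continuous _).intervalIntegrable _ _
  · exact (by fun_prop : Continuous _).intervalIntegrable _ _
end

section
/- For every natural number n, the n-th Catalan number is given by the semicircle moment formula Cₙ = (2/π) ∫_{−1}^{1} (2z)^{2n} √(1 − z²) dz. -/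
theorem semicircle_rec (n : ℕ) :
    (2 * n + 4 : ℝ) * ∫ z in (-1 : ℝ)..1, z ^ (2 * n + 2) * Real.sqrt (1 - z ^ 2)
      = (2 * n + 1) * ∫ z in (-1 : ℝ)..1, z ^ (2 * n) * Real.sqrt (1 - z ^ 2) := by
  have hc : ∀ k : ℕ, Continuous fun z : ℝ => z ^ k * Real.sqrt (1 - z ^ 2) := by
    intro k; fun_prop
  have key : ∫ z in (-1 : ℝ)..1, ((2 * n + 1 : ℝ) * (z ^ (2 * n) * Real.sqrt (1 - z ^ 2))
      - (2 * n + 4 : ℝ) * (z ^ (2 * n + 2) * Real.sqrt (1 - z ^ 2))) = 0 := by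
    rw [intervalIntegral.integral_eq_sub_of_hasDerivAt_of_le (by norm_num)
      (f := fun z : ℝ => z ^ (2 * n + 1) * ((1 - z ^ 2) * Real.sqrt (1 - z ^ 2)))]
    · simp
    · fun_prop
    · intro z hz
      have hp : 0 < 1 - z ^ 2 := by nlinarith [hz.1, hz.2]
      have h1 : HasDerivAt (fun z : ℝ => 1 - z ^ 2) (-(2 * z)) z := by
        simpa using (hasDerivAt_pow 2 z).const_sub 1
      have h2 := (hasDerivAt_pow (2 * n + 1) z).mul (h1.mul (h1.sqrt hp.ne'))
      refine h2.congr_deriv ?_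
      have hs : Real.sqrt (1 - z ^ 2) ≠ 0 := (Real.sqrt_pos.2 hp).ne'
      have hq : Real.sqrt (1 - z ^ 2) ^ 2 = 1 - z ^ 2 := Real.sq_sqrt hp.le
      have h3 : (1 - z ^ 2) * (-(2 * z) / (2 * Real.sqrt (1 - z ^ 2)))
          = - z * Real.sqrt (1 - z ^ 2) := by
        field_simp
        rw [hq]
      try simp only [Pi.mul_apply]
      rw [h3]
      push_cast
      try simp only [Nat.add_sub_cancel]
      ring
    · exact (((hc _).const_mul _).sub ((hc _).const_mul _)).intervalIntegrable _ _
  rw [intervalIntegral.integral_sub (((hc _).const_mul _).intervalIntegrable _ _)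
    (((hc _).const_mul _).intervalIntegrable _ _), intervalIntegral.integral_const_mul,
    intervalIntegral.integral_const_mul] at key
  linarith

theorem catalan_rec_real (n : ℕ) :
    (n + 2 : ℝ) * catalan (n + 1) = 2 * (2 * n + 1) * catalan n := by
  have h1 := succ_mul_catalan_eq_centralBinom n
  have h2 := succ_mul_catalan_eq_centralBinom (n + 1)
  have h3 := Nat.succ_mul_centralBinom_succ n
  rw [← h1, ← h2] at h3
  have h4 : ((n : ℝ) + 1) * ((n + 1 + 1) * catalan (n + 1))
      = 2 * (2 * n + 1) * ((n + 1) * catalan n) := by exact_mod_cast h3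
  have : (n : ℝ) + 1 ≠ 0 := by positivity
  apply mul_left_cancel₀ this
  linarith

theorem catalan_eq_semicircle_moment (n : ℕ) :
    (catalan n : ℝ) =
      (2 / Real.pi) * ∫ z in (-1 : ℝ)..1, (2 * z) ^ (2 * n) * Real.sqrt (1 - z ^ 2) := by
  have hr : ∀ n : ℕ, ∫ z in (-1 : ℝ)..1, (2 * z) ^ (2 * n) * Real.sqrt (1 - z ^ 2)
      = 4 ^ n * ∫ z in (-1 : ℝ)..1, z ^ (2 * n) * Real.sqrt (1 - z ^ 2) := by
    intro n
    rw [← intervalIntegral.integral_const_mul]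
    congr 1
    ext z
    rw [mul_pow, pow_mul 2 2 n]
    norm_num
    ring
  rw [hr]
  induction n with
  | zero =>
    have := Real.pi_ne_zero
    simp [integral_sqrt_one_sub_sq]
  | succ n ih =>
    have h1 := semicircle_rec n
    have h2 := catalan_rec_real n
    rw [ih] at h2
    have : (n : ℝ) + 2 ≠ 0 := by positivity
    apply mul_left_cancel₀ this
    rw [h2, show 2 * (n + 1) = 2 * n + 2 by ring]
    linear_combination (-(2 / Real.pi) * 4 ^ n * 2) * h1
end

section
/- For all real numbers s ≥ 0 and p > 0, the Laplace transform of the continuous binomial coefficient in its upper argument satisfies ∫_{0}^{∞} e^{−pw} {s+w choose s} dw = e^{s/p} ((p+1)/p)² − 1. -/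
/-- The continuous binomial coefficient `{x choose s}`. -/
noncomputable def cbinom (x s : ℝ) : ℝ :=
  ∑' n : ℕ, (s * (x - s)) ^ n *
    (2 / ((n.factorial : ℝ)) ^ 2 + x / ((n.factorial : ℝ) * ((n + 1).factorial : ℝ)))

open MeasureTheory in
lemma lap_aux (p : ℝ) (hp : 0 < p) (n : ℕ) :
    Integrable (fun w : ℝ => w ^ n * Real.exp (-(p * w))) (volume.restrict (Set.Ioi 0)) ∧
    (∫ w in Set.Ioi (0 : ℝ), w ^ n * Real.exp (-(p * w))) = n.factorial / p ^ (n + 1) := by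
  have key := Real.integral_rpow_mul_exp_neg_mul_Ioi (a := (n : ℝ) + 1) (by positivity) hp
  simp only [add_sub_cancel_right, Real.rpow_natCast, Real.Gamma_nat_eq_factorial] at key
  have e : (1 / p) ^ ((n : ℝ) + 1) * (n.factorial : ℝ) = n.factorial / p ^ (n + 1) := by
    have : ((n : ℝ) + 1) = ((n + 1 : ℕ) : ℝ) := by push_cast; rfl
    rw [this, Real.rpow_natCast, one_div, inv_pow]
    ring
  rw [e] at key
  refine ⟨?_, key⟩
  apply Integrable.of_integral_ne_zero
  rw [key]
  positivity

theorem laplace_cbinom (s p : ℝ) (hs : 0 ≤ s) (hp : 0 < p) :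
    (∫ w in Set.Ioi (0 : ℝ), Real.exp (-(p * w)) * cbinom (s + w) s) =
      Real.exp (s / p) * ((p + 1) / p) ^ 2 - 1 := by
  let F : ℕ → ℝ → ℝ := fun n w => Real.exp (-(p * w)) * ((s * (s + w - s)) ^ n *
    (2 / ((n.factorial : ℝ)) ^ 2 + (s + w) / ((n.factorial : ℝ) * ((n + 1).factorial : ℝ))))
  let A : ℕ → ℝ := fun n => s ^ n * (2 / ((n.factorial : ℝ)) ^ 2
    + s / ((n.factorial : ℝ) * ((n + 1).factorial : ℝ)))
  let B : ℕ → ℝ := fun n => s ^ n * (1 / ((n.factorial : ℝ) * ((n + 1).factorial : ℝ)))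
  have hF : ∀ n, F n = fun w => A n * (w ^ n * Real.exp (-(p * w)))
      + B n * (w ^ (n + 1) * Real.exp (-(p * w))) := by
    intro n
    funext w
    simp only [F, A, B, add_sub_cancel_left, mul_pow]
    ring
  have hint : ∀ n, MeasureTheory.Integrable (F n)
      (MeasureTheory.volume.restrict (Set.Ioi 0)) := by
    intro n
    rw [hF]
    exact ((lap_aux p hp n).1.const_mul _).add ((lap_aux p hp (n + 1)).1.const_mul _)
  have hval : ∀ n, (∫ w in Set.Ioi (0 : ℝ), F n w) =
      (2 / p + 1 / p ^ 2) * ((s / p) ^ n / n.factorial)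
        + (s / p) ^ (n + 1) / ((n + 1).factorial : ℝ) := by
    intro n
    rw [hF, MeasureTheory.integral_add ((lap_aux p hp n).1.const_mul _)
      ((lap_aux p hp (n + 1)).1.const_mul _), MeasureTheory.integral_const_mul,
      MeasureTheory.integral_const_mul, (lap_aux p hp n).2, (lap_aux p hp (n + 1)).2]
    have h1 : (n.factorial : ℝ) ≠ 0 := by positivity
    have h2 : ((n + 1).factorial : ℝ) ≠ 0 := by positivity
    simp only [A, B, div_pow]
    field_simp
    ring
  have hexp : HasSum (fun n : ℕ => (s / p) ^ n / (n.factorial : ℝ)) (Real.exp (s / p)) := by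
    rw [Real.exp_eq_exp_ℝ]
    exact NormedSpace.expSeries_div_hasSum_exp (s / p)
  have hexp1 : HasSum (fun n : ℕ => (s / p) ^ (n + 1) / ((n + 1).factorial : ℝ))
      (Real.exp (s / p) - 1) := by
    have := (hasSum_nat_add_iff' (f := fun n : ℕ => (s / p) ^ n / (n.factorial : ℝ)) 1).2 hexp
    simpa using this
  have htot := (hexp.mul_left (2 / p + 1 / p ^ 2)).add hexp1
  have hnorm : ∀ n, (∫ w in Set.Ioi (0 : ℝ), ‖F n w‖) = ∫ w in Set.Ioi (0 : ℝ), F n w := by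
    intro n
    refine MeasureTheory.setIntegral_congr_fun measurableSet_Ioi (fun w hw => ?_)
    have hw' : 0 < w := hw
    refine Real.norm_of_nonneg ?_
    simp only [F, add_sub_cancel_left]
    positivity
  have hsum : Summable fun n => ∫ w in Set.Ioi (0 : ℝ), ‖F n w‖ := by
    simp only [hnorm, hval]
    exact htot.summable
  have hS := MeasureTheory.hasSum_integral_of_summable_integral_norm hint hsum
  simp only [hval] at hS
  have hfin := hS.unique htot
  have : (fun w => Real.exp (-(p * w)) * cbinom (s + w) s) = fun w => ∑' n, F n w := by
    funext w
    simp only [F, cbinom, tsum_mul_left]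
  rw [this, hfin]
  field_simp
  ring
end

section
/- For all real numbers x ≥ 0, α > 0, and u, one has ∫_{0}^{x} {x choose s} α^s e^{us} ds = 2 α^{x/2} e^{ux/2} [ cosh((x/2)√(4 + L²)) − cosh((x/2) L) + (2/√(4 + L²)) sinh((x/2)√(4 + L²)) ], where L = u + log α. -/
open Finset in
lemma cb_beta (h : ℝ) (n : ℕ) : ∀ m : ℕ,
    (∫ t in (-h)..h, (h ^ 2 - t ^ 2) ^ n * t ^ (2 * m)) =
      h ^ (2 * (n + m) + 1) * (2 * 4 ^ n * n.factorial * (n + m).factorial * (2 * m).factorial /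
        (m.factorial * (2 * (n + m) + 1).factorial)) := by
  induction n with
  | zero =>
    intro m
    have h1 : (-h) ^ (2 * m + 1) = - h ^ (2 * m + 1) := (odd_two_mul_add_one m).neg_pow h
    have e : (2 * m + 1).factorial = (2 * m + 1) * (2 * m).factorial := Nat.factorial_succ _
    simp only [pow_zero, one_mul, integral_pow, h1, zero_add, e]
    push_cast
    have := Nat.factorial_ne_zero m
    have := Nat.factorial_ne_zero (2 * m)
    field_simp
    norm_num
  | succ n ih =>
    intro m
    have key : (2 * (m : ℝ) + 1) * (∫ t in (-h)..h, (h ^ 2 - t ^ 2) ^ (n + 1) * t ^ (2 * m)) =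
        2 * (n + 1) * ∫ t in (-h)..h, (h ^ 2 - t ^ 2) ^ n * t ^ (2 * (m + 1)) := by
      have hd : ∀ t ∈ Set.uIcc (-h) h,
          HasDerivAt (fun t : ℝ => (h ^ 2 - t ^ 2) ^ (n + 1) * t ^ (2 * m + 1))
          ((2 * (m : ℝ) + 1) * ((h ^ 2 - t ^ 2) ^ (n + 1) * t ^ (2 * m)) -
            2 * (n + 1) * ((h ^ 2 - t ^ 2) ^ n * t ^ (2 * (m + 1)))) t := by
        intro t _
        have h1 : HasDerivAt (fun t : ℝ => h ^ 2 - t ^ 2) (-(2 * t)) t := by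
          simpa using (hasDerivAt_pow 2 t).const_sub (h ^ 2)
        have h2 := (h1.fun_pow (n + 1)).mul (hasDerivAt_pow (2 * m + 1) t)
        refine h2.congr_deriv ?_
        push_cast
        simp
        ring
      have hI := intervalIntegral.integral_eq_sub_of_hasDerivAt hd
        (Continuous.intervalIntegrable (by fun_prop) _ _)
      rw [intervalIntegral.integral_sub (Continuous.intervalIntegrable (by fun_prop) _ _)
        (Continuous.intervalIntegrable (by fun_prop) _ _),
        intervalIntegral.integral_const_mul, intervalIntegral.integral_const_mul] at hI
      simp at hI
      linarith
    rw [ih (m + 1)] at key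
    have hp : (2 * (m : ℝ) + 1) ≠ 0 := by positivity
    apply mul_left_cancel₀ hp
    rw [key]
    have e1 : n + (m + 1) = n + 1 + m := by ring
    have e2 : (2 * (m + 1)).factorial = (2 * m + 2) * ((2 * m + 1) * (2 * m).factorial) := by
      rw [show 2 * (m + 1) = 2 * m + 1 + 1 by ring, Nat.factorial_succ, Nat.factorial_succ]
    rw [e1, e2, Nat.factorial_succ m, Nat.factorial_succ n]
    push_cast
    have := Nat.factorial_ne_zero m
    have := Nat.factorial_ne_zero (2 * (n + 1 + m) + 1)
    field_simp
    ring

/-- coefficient -/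
noncomputable def cbc (h : ℝ) (n : ℕ) : ℝ :=
  2 / ((n.factorial : ℝ)) ^ 2 + 2 * h / ((n.factorial : ℝ) * ((n + 1).factorial : ℝ))

lemma cbc_nonneg (h : ℝ) (hh : 0 ≤ h) (n : ℕ) : 0 ≤ cbc h n := by
  unfold cbc; positivity

lemma cbc_le (h : ℝ) (hh : 0 ≤ h) (n : ℕ) : cbc h n ≤ (2 + 2 * h) / n.factorial := by
  unfold cbc
  have a : (1 : ℝ) ≤ n.factorial := by exact_mod_cast Nat.factorial_pos n
  have b : (1 : ℝ) ≤ (n + 1).factorial := by exact_mod_cast Nat.factorial_pos (n + 1)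
  rw [add_div]
  gcongr
  · nlinarith
  · nlinarith

lemma cb_sum (h : ℝ) (hh : 0 ≤ h) : Summable (fun n : ℕ => (h ^ 2) ^ n * cbc h n) := by
  refine Summable.of_nonneg_of_le (fun n => mul_nonneg (by positivity) (cbc_nonneg h hh n))
    (fun n => mul_le_mul_of_nonneg_left (cbc_le h hh n) (by positivity)) ?_
  refine ((Real.summable_pow_div_factorial (h ^ 2)).mul_left (2 + 2 * h)).congr fun n => ?_
  ring

lemma cb_bd (h t : ℝ) (hh : 0 ≤ h) (ht : t ∈ Set.Icc (-h) h) (n : ℕ) :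
    ‖(h ^ 2 - t ^ 2) ^ n * cbc h n‖ ≤ (h ^ 2) ^ n * cbc h n := by
  have h1 : t ^ 2 ≤ h ^ 2 := sq_le_sq' ht.1 ht.2
  have h2 := sq_nonneg t
  have h3 := cbc_nonneg h hh n
  rw [Real.norm_eq_abs, abs_of_nonneg (mul_nonneg (pow_nonneg (by linarith) _) h3)]
  gcongr
  linarith

lemma cb_swap (h L : ℝ) (hh : 0 ≤ h) :
    HasSum (fun p : ℕ × ℕ => ∫ t in (-h)..h, ((h ^ 2 - t ^ 2) ^ p.1 * cbc h p.1) *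
      ((L * t) ^ (2 * p.2) / (2 * p.2).factorial))
    (∫ t in (-h)..h, (∑' n : ℕ, (h ^ 2 - t ^ 2) ^ n * cbc h n) * Real.cosh (L * t)) := by
  have sI : ∀ t ∈ Set.uIoc (-h) h, t ∈ Set.Icc (-h) h := by
    intro t ht
    rw [Set.uIoc_of_le (by linarith)] at ht
    exact Set.Ioc_subset_Icc_self ht
  have hs : Summable (fun p : ℕ × ℕ => ((h ^ 2) ^ p.1 * cbc h p.1) *
      ((L * h) ^ (2 * p.2) / (2 * p.2).factorial)) :=
    (cb_sum h hh).mul_of_nonneg (Real.hasSum_cosh (L * h)).summable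
      (fun n => mul_nonneg (by positivity) (cbc_nonneg h hh n))
      (fun n => div_nonneg ((even_two_mul n).pow_nonneg _) (by positivity))
  refine intervalIntegral.hasSum_integral_of_dominated_convergence
    (fun p _ => ((h ^ 2) ^ p.1 * cbc h p.1) *
      ((L * h) ^ (2 * p.2) / (2 * p.2).factorial)) ?_ ?_ ?_ ?_ ?_
  · intro p
    exact Continuous.aestronglyMeasurable (by fun_prop)
  · intro p
    refine Filter.Eventually.of_forall fun t ht => ?_
    rw [norm_mul]
    refine mul_le_mul (cb_bd h t hh (sI t ht) _) ?_ (norm_nonneg _)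
      (mul_nonneg (by positivity) (cbc_nonneg h hh _))
    rw [Real.norm_eq_abs, abs_of_nonneg
      (div_nonneg ((even_two_mul p.2).pow_nonneg _) (by positivity))]
    refine div_le_div_of_nonneg_right ?_ (by positivity)
    rw [pow_mul, pow_mul]
    have h1 : t ^ 2 ≤ h ^ 2 := sq_le_sq' (sI t ht).1 (sI t ht).2
    refine pow_le_pow_left₀ (sq_nonneg _) ?_ _
    rw [mul_pow, mul_pow]
    exact mul_le_mul_of_nonneg_left h1 (sq_nonneg _)
  · exact Filter.Eventually.of_forall fun t ht => hs
  · exact continuous_const.intervalIntegrable _ _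
  · refine Filter.Eventually.of_forall fun t ht => ?_
    have s1 : Summable (fun n : ℕ => ‖(h ^ 2 - t ^ 2) ^ n * cbc h n‖) :=
      Summable.of_nonneg_of_le (fun _ => norm_nonneg _) (cb_bd h t hh (sI t ht)) (cb_sum h hh)
    have s2 := Real.hasSum_cosh (L * t)
    have s3 : Summable (fun m : ℕ => ‖(L * t) ^ (2 * m) / ((2 * m).factorial : ℝ)‖) :=
      s2.summable.norm
    have s4 := summable_mul_of_summable_norm s1 s3
    have s5 : HasSum (fun n : ℕ => (h ^ 2 - t ^ 2) ^ n * cbc h n)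
      (∑' n : ℕ, (h ^ 2 - t ^ 2) ^ n * cbc h n) := s1.of_norm.hasSum
    have s6 := HasSum.mul (f := fun n : ℕ => (h ^ 2 - t ^ 2) ^ n * cbc h n)
      (g := fun m : ℕ => (L * t) ^ (2 * m) / ((2 * m).factorial : ℝ)) s5 s2 s4
    exact s6

open Finset in
lemma cb_binom (a b : ℝ) (N : ℕ) :
    ∑ p ∈ antidiagonal N, a ^ p.1 * b ^ p.2 / (p.1.factorial * p.2.factorial) =
      (a + b) ^ N / N.factorial := by
  rw [(Commute.all a b).add_pow', sum_div]
  refine sum_congr rfl fun p hp => ?_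
  rw [HasAntidiagonal.mem_antidiagonal] at hp
  subst hp
  rw [nsmul_eq_mul, Nat.cast_add_choose]
  have := Nat.factorial_ne_zero p.1
  have := Nat.factorial_ne_zero p.2
  have := Nat.factorial_ne_zero (p.1 + p.2)
  field_simp

lemma cb_term (h L : ℝ) (n m : ℕ) :
    (∫ t in (-h)..h, ((h ^ 2 - t ^ 2) ^ n * cbc h n) *
      ((L * t) ^ (2 * m) / (2 * m).factorial)) =
    4 * h ^ (2 * (n + m) + 1) * (n + m).factorial / (2 * (n + m) + 1).factorial *
        (4 ^ n * (L ^ 2) ^ m / (n.factorial * m.factorial)) +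
    2 * h ^ (2 * (n + m + 1)) * (n + m + 1).factorial / (2 * (n + m + 1)).factorial *
        (4 ^ (n + 1) * (L ^ 2) ^ m / ((n + 1).factorial * m.factorial)) := by
  have e : (∫ t in (-h)..h, ((h ^ 2 - t ^ 2) ^ n * cbc h n) *
      ((L * t) ^ (2 * m) / (2 * m).factorial)) =
      (cbc h n * (L ^ 2) ^ m / (2 * m).factorial) *
        ∫ t in (-h)..h, (h ^ 2 - t ^ 2) ^ n * t ^ (2 * m) := by
    rw [← intervalIntegral.integral_const_mul]
    congr 1
    ext t
    rw [mul_pow, pow_mul L]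
    ring
  rw [e, cb_beta, cbc]
  have e2 : (2 * (n + m + 1)).factorial = (2 * (n + m + 1)) * (2 * (n + m) + 1).factorial := by
    rw [show 2 * (n + m + 1) = 2 * (n + m) + 1 + 1 by ring, Nat.factorial_succ]
  rw [e2, Nat.factorial_succ (n + m), Nat.factorial_succ n]
  push_cast
  have := Nat.factorial_ne_zero n
  have := Nat.factorial_ne_zero m
  have := Nat.factorial_ne_zero (2 * m)
  have := Nat.factorial_ne_zero (n + m)
  have := Nat.factorial_ne_zero (2 * (n + m) + 1)
  field_simp
  ring

open Finset in
lemma cb_diag (h L : ℝ) (N : ℕ) :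
    ∑ p ∈ antidiagonal N, (∫ t in (-h)..h, ((h ^ 2 - t ^ 2) ^ p.1 * cbc h p.1) *
      ((L * t) ^ (2 * p.2) / (2 * p.2).factorial)) =
    4 * (h ^ (2 * N + 1) * (4 + L ^ 2) ^ N / (2 * N + 1).factorial) +
    2 * (h ^ (2 * (N + 1)) * ((4 + L ^ 2) ^ (N + 1)) / (2 * (N + 1)).factorial -
      (h * L) ^ (2 * (N + 1)) / (2 * (N + 1)).factorial) := by
  have b1 := cb_binom 4 (L ^ 2) N
  have b2 := cb_binom 4 (L ^ 2) (N + 1)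
  rw [Nat.sum_antidiagonal_succ] at b2
  simp only [pow_zero, one_mul, Nat.factorial_zero, Nat.cast_one] at b2
  have b3 := eq_sub_of_add_eq' b2
  calc _ = ∑ p ∈ antidiagonal N, (4 * h ^ (2 * N + 1) * N.factorial / (2 * N + 1).factorial *
        (4 ^ p.1 * (L ^ 2) ^ p.2 / (p.1.factorial * p.2.factorial)) +
      2 * h ^ (2 * (N + 1)) * (N + 1).factorial / (2 * (N + 1)).factorial *
        (4 ^ (p.1 + 1) * (L ^ 2) ^ p.2 / ((p.1 + 1).factorial * p.2.factorial))) := by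
        refine sum_congr rfl fun p hp => ?_
        rw [HasAntidiagonal.mem_antidiagonal] at hp
        subst hp
        exact cb_term h L p.1 p.2
    _ = _ := by
        rw [sum_add_distrib, ← mul_sum, ← mul_sum, b1, b3]
        have := Nat.factorial_ne_zero N
        have := Nat.factorial_ne_zero (N + 1)
        have := Nat.factorial_ne_zero (2 * N + 1)
        have := Nat.factorial_ne_zero (2 * (N + 1))
        rw [mul_pow h L, pow_mul L]
        field_simp

lemma cb_cosh (h L : ℝ) (hh : 0 ≤ h) :
    (∫ t in (-h)..h, (∑' n : ℕ, (h ^ 2 - t ^ 2) ^ n * cbc h n) * Real.cosh (L * t)) =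
    2 * (Real.cosh (h * Real.sqrt (4 + L ^ 2)) - Real.cosh (h * L) +
      2 / Real.sqrt (4 + L ^ 2) * Real.sinh (h * Real.sqrt (4 + L ^ 2))) := by
  have H := cb_swap h L hh
  have H1 := (Finset.HasAntidiagonal.sigmaAntidiagonalEquivProd.hasSum_iff.mpr H).sigma
    (fun N => hasSum_fintype _)
  have H2 : HasSum (fun N : ℕ => ∑ p ∈ Finset.HasAntidiagonal.antidiagonal N,
      (∫ t in (-h)..h, ((h ^ 2 - t ^ 2) ^ p.1 * cbc h p.1) *
      ((L * t) ^ (2 * p.2) / (2 * p.2).factorial))) (∫ t in (-h)..h,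
        (∑' n : ℕ, (h ^ 2 - t ^ 2) ^ n * cbc h n) * Real.cosh (L * t)) := by
    convert H1 using 2 with N
    rw [← Finset.sum_coe_sort]
    rfl
  simp only [cb_diag] at H2
  refine H2.unique ?_
  set R := Real.sqrt (4 + L ^ 2) with hR
  have hRp : 0 < R := Real.sqrt_pos.mpr (by positivity)
  have hR2 : 4 + L ^ 2 = R ^ 2 := (Real.sq_sqrt (by positivity)).symm
  rw [hR2]
  have a1 := ((Real.hasSum_sinh (h * R)).mul_left (4 / R))
  have a2 := (hasSum_nat_add_iff' 1).mpr (Real.hasSum_cosh (h * R))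
  have a3 := (hasSum_nat_add_iff' 1).mpr (Real.hasSum_cosh (h * L))
  have a4 := a1.add ((a2.sub a3).mul_left 2)
  have ev : 2 * (Real.cosh (h * R) - Real.cosh (h * L) + 2 / R * Real.sinh (h * R)) =
      4 / R * Real.sinh (h * R) + 2 * ((Real.cosh (h * R) -
        ∑ i ∈ Finset.range 1, (h * R) ^ (2 * i) / ((2 * i).factorial : ℝ)) -
      (Real.cosh (h * L) - ∑ i ∈ Finset.range 1, (h * L) ^ (2 * i) / ((2 * i).factorial : ℝ))) := by
    simp
    ring
  rw [ev]
  refine Eq.subst (motive := fun f => HasSum f _) (funext fun N => ?_) a4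
  rw [mul_pow h R, mul_pow h R, ← pow_mul, ← pow_mul, pow_succ R]
  field_simp

lemma cb_exp (h L : ℝ) (hh : 0 ≤ h) :
    (∫ t in (-h)..h, (∑' n : ℕ, (h ^ 2 - t ^ 2) ^ n * cbc h n) * Real.exp (L * t)) =
    (∫ t in (-h)..h, (∑' n : ℕ, (h ^ 2 - t ^ 2) ^ n * cbc h n) * Real.cosh (L * t)) := by
  set S : ℝ → ℝ := fun t => ∑' n : ℕ, (h ^ 2 - t ^ 2) ^ n * cbc h n with hS
  have hc : ContinuousOn S (Set.uIcc (-h) h) := by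
    rw [Set.uIcc_of_le (by linarith)]
    exact continuousOn_tsum (fun n => by fun_prop) (cb_sum h hh) (fun n t ht => cb_bd h t hh ht n)
  have i1 : IntervalIntegrable (fun t => S t * Real.cosh (L * t)) MeasureTheory.volume (-h) h :=
    (hc.mul (by fun_prop)).intervalIntegrable
  have i2 : IntervalIntegrable (fun t => S t * Real.sinh (L * t)) MeasureTheory.volume (-h) h :=
    (hc.mul (by fun_prop)).intervalIntegrable
  have o : (∫ t in (-h)..h, S t * Real.sinh (L * t)) = 0 := by
    have := intervalIntegral.integral_comp_neg (a := -h) (b := h)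
      (fun t => S t * Real.sinh (L * t))
    have e : ∀ t, S (-t) = S t := by intro t; simp [hS]
    simp only [e, neg_neg, mul_neg, Real.sinh_neg, intervalIntegral.integral_neg] at this
    linarith
  have : ∀ t, S t * Real.exp (L * t) = S t * Real.cosh (L * t) + S t * Real.sinh (L * t) := by
    intro t; rw [← mul_add, Real.cosh_add_sinh]
  change (∫ t in (-h)..h, S t * Real.exp (L * t)) = ∫ t in (-h)..h, S t * Real.cosh (L * t)
  simp only [this]
  rw [intervalIntegral.integral_add i1 i2, o, add_zero]

theorem cbinom_exp_integral (x α u : ℝ) (hx : 0 ≤ x) (hα : 0 < α) :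
    (∫ s in (0 : ℝ)..x, cbinom x s * α ^ s * Real.exp (u * s)) =
      2 * α ^ (x / 2) * Real.exp (u * x / 2) *
        (Real.cosh (x / 2 * Real.sqrt (4 + (u + Real.log α) ^ 2)) -
          Real.cosh (x / 2 * (u + Real.log α)) +
          2 / Real.sqrt (4 + (u + Real.log α) ^ 2) *
            Real.sinh (x / 2 * Real.sqrt (4 + (u + Real.log α) ^ 2))) := by
  set L := u + Real.log α with hL
  have hs := intervalIntegral.integral_comp_add_right (a := -(x / 2)) (b := x / 2)
    (fun s => cbinom x s * α ^ s * Real.exp (u * s)) (x / 2)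
  rw [show -(x / 2) + x / 2 = 0 by ring, show x / 2 + x / 2 = x by ring] at hs
  rw [← hs]
  have e : ∀ t : ℝ, cbinom x (t + x / 2) * α ^ (t + x / 2) * Real.exp (u * (t + x / 2)) =
      (α ^ (x / 2) * Real.exp (u * x / 2)) *
      ((∑' n : ℕ, ((x / 2) ^ 2 - t ^ 2) ^ n * cbc (x / 2) n) * Real.exp (L * t)) := by
    intro t
    have e1 : cbinom x (t + x / 2) = ∑' n : ℕ, ((x / 2) ^ 2 - t ^ 2) ^ n * cbc (x / 2) n := by
      unfold cbinom cbc
      congr 1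
      ext n
      rw [show (t + x / 2) * (x - (t + x / 2)) = (x / 2) ^ 2 - t ^ 2 by ring,
        show 2 * (x / 2) = x by ring]
    rw [e1, Real.rpow_add hα, Real.rpow_def_of_pos hα t, hL,
      show u * (t + x / 2) = u * t + u * x / 2 by ring, Real.exp_add,
      show (u + Real.log α) * t = Real.log α * t + u * t by ring, Real.exp_add]
    ring
  simp only [e]
  rw [intervalIntegral.integral_const_mul, cb_exp _ _ (by linarith), cb_cosh _ _ (by linarith)]
  ring
end

section
/- For every real number x ≥ 0, ∫_{0}^{x} {x choose s} ds = 2 (e^x − 1). -/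
lemma beta_aux (x : ℝ) (n : ℕ) : ∀ m : ℕ, (∫ s in (0 : ℝ)..x, s ^ m * (x - s) ^ n) =
    x ^ (m + n + 1) * (m.factorial * n.factorial) / ((m + n + 1).factorial : ℝ) := by
  induction n with
  | zero =>
    intro m
    have : ((m.factorial : ℝ)) ≠ 0 := by positivity
    have : (m : ℝ) + 1 ≠ 0 := by positivity
    simp [Nat.factorial_succ]
    field_simp
  | succ n ih =>
    intro m
    have key : (∫ s in (0 : ℝ)..x, ((m + 1 : ℝ) * (s ^ m * (x - s) ^ (n + 1))
        - (n + 1 : ℝ) * (s ^ (m + 1) * (x - s) ^ n))) = 0 := by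
      have := intervalIntegral.integral_eq_sub_of_hasDerivAt (a := 0) (b := x)
        (f := fun s : ℝ => s ^ (m + 1) * (x - s) ^ (n + 1))
        (f' := fun s : ℝ => ((m + 1 : ℝ) * (s ^ m * (x - s) ^ (n + 1))
        - (n + 1 : ℝ) * (s ^ (m + 1) * (x - s) ^ n))) ?_ ?_
      · rw [this]; simp
      · intro s _
        have h1 := (hasDerivAt_id s).pow (m + 1)
        have h2 := ((hasDerivAt_id s).const_sub x).pow (n + 1)
        have h3 := h1.mul h2
        refine h3.congr_deriv ?_
        simp only [Pi.pow_apply, id, Nat.add_sub_cancel]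
        push_cast
        ring
      · exact Continuous.intervalIntegrable (by fun_prop) _ _
    rw [intervalIntegral.integral_sub (Continuous.intervalIntegrable (by fun_prop) _ _)
      (Continuous.intervalIntegrable (by fun_prop) _ _), intervalIntegral.integral_const_mul,
      intervalIntegral.integral_const_mul, ih (m + 1)] at key
    have e : m + 1 + n + 1 = m + (n + 1) + 1 := by ring
    rw [e] at key
    have hm : (m : ℝ) + 1 ≠ 0 := by positivity
    apply mul_left_cancel₀ hm
    rw [sub_eq_zero.1 key]
    push_cast [Nat.factorial_succ n, Nat.factorial_succ m]
    ring

lemma term_int (x : ℝ) (n : ℕ) : (∫ s in (0 : ℝ)..x, (s * (x - s)) ^ n *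
    (2 / ((n.factorial : ℝ)) ^ 2 + x / ((n.factorial : ℝ) * ((n + 1).factorial : ℝ)))) =
    2 * (x ^ (2 * n + 1) / ((2 * n + 1).factorial : ℝ)) +
    2 * (x ^ (2 * n + 1 + 1) / ((2 * n + 1 + 1).factorial : ℝ)) := by
  rw [intervalIntegral.integral_mul_const]
  simp_rw [mul_pow]
  rw [beta_aux, ← two_mul]
  have h1 : ((n.factorial : ℝ)) ≠ 0 := by positivity
  have h2 : (((2 * n + 1).factorial : ℝ)) ≠ 0 := by positivity
  have h3 : (n : ℝ) + 1 ≠ 0 := by positivity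
  have h4 : 2 * (n : ℝ) + 1 + 1 ≠ 0 := by positivity
  rw [Nat.factorial_succ (2 * n + 1), Nat.factorial_succ n]
  push_cast
  field_simp
  ring

theorem integral_cbinom (x : ℝ) (hx : 0 ≤ x) :
    (∫ s in (0 : ℝ)..x, cbinom x s) = 2 * (Real.exp x - 1) := by
  have hs : Summable (fun k : ℕ => 2 * (x ^ (k + 1) / ((k + 1).factorial : ℝ))) :=
    ((summable_nat_add_iff 1).2 (Real.summable_pow_div_factorial x)).mul_left 2
  have he : Summable (fun n : ℕ => 2 * (x ^ (2 * n + 1) / ((2 * n + 1).factorial : ℝ))) :=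
    hs.comp_injective (i := fun n : ℕ => 2 * n) (fun a b h => by simpa using h)
  have ho : Summable (fun n : ℕ => 2 * (x ^ (2 * n + 1 + 1) / ((2 * n + 1 + 1).factorial : ℝ))) :=
    hs.comp_injective (i := fun n : ℕ => 2 * n + 1) (fun a b h => by simpa using h)
  have hval : ∑' k : ℕ, 2 * (x ^ (k + 1) / ((k + 1).factorial : ℝ)) = 2 * (Real.exp x - 1) := by
    rw [tsum_mul_left]
    have h := (Real.summable_pow_div_factorial x).tsum_eq_zero_add
    have h' : Real.exp x = ∑' k : ℕ, x ^ k / (k.factorial : ℝ) := by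
      rw [Real.exp_eq_exp_ℝ, NormedSpace.exp_eq_tsum_div]
    rw [h', h]
    simp
  unfold cbinom
  have hti := term_int x
  simp_rw [intervalIntegral.integral_of_le hx] at hti ⊢
  rw [← MeasureTheory.integral_tsum_of_summable_integral_norm]
  · simp_rw [hti]
    rw [he.tsum_add ho, ← hval]
    exact tsum_even_add_odd (f := fun k : ℕ => 2 * (x ^ (k + 1) / ((k + 1).factorial : ℝ))) he ho
  · intro n
    exact (Continuous.integrableOn_Ioc (by fun_prop))
  · refine (he.add ho).congr fun n => ?_
    rw [← hti n]
    refine MeasureTheory.setIntegral_congr_fun measurableSet_Ioc fun s hs => ?_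
    have : 0 ≤ s * (x - s) := mul_nonneg hs.1.le (sub_nonneg.2 hs.2)
    exact (Real.norm_of_nonneg (by positivity)).symm
end

section
/- Continuous Chu–Vandermonde identity: for all real numbers s₁, s₂ ≥ 0 and x ≥ 0, setting m = (s₁+s₂)/2 and f_s(u) = {u+s choose s}, one has ∫_{0}^{x} f_{s₁}(u) f_{s₂}(x−u) du + f_{s₁}(x) + f_{s₂}(x) = ∫_{0}^{x} f_m(u) f_m(x−u) du + 2 f_m(x). -/
open MeasureTheory PowerSeries

noncomputable def cvP (s : ℝ) : PowerSeries ℝ :=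
  rescale s (PowerSeries.exp ℝ) + (X * rescale s (PowerSeries.exp ℝ) + X * rescale s (PowerSeries.exp ℝ)) +
    X * (X * rescale s (PowerSeries.exp ℝ))

noncomputable def cvc (s : ℝ) (n : ℕ) : ℝ := coeff n (cvP s)

lemma cvP_mul (a b : ℝ) : cvP a * cvP b = rescale (a + b) (PowerSeries.exp ℝ) * (1 + X) ^ 4 := by
  rw [← exp_mul_exp_eq_exp_add, cvP, cvP]
  ring

lemma cv_congr {ι : Type} {f g : ι → ℝ} {a : ℝ} (h : ∀ i, f i = g i) :
    HasSum f a ↔ HasSum g a := by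
  rw [funext h]

lemma cvE (s : ℝ) (n : ℕ) :
    coeff n (rescale s (PowerSeries.exp ℝ)) = s ^ n / (n.factorial : ℝ) := by
  simp [coeff_rescale, PowerSeries.coeff_exp, div_eq_mul_inv]

lemma cvc_zero (s : ℝ) : cvc s 0 = 1 := by
  have := cvE s 0
  simp only [cvc, cvP, map_add, coeff_zero_X_mul, this]
  simp

lemma cvc_one (s : ℝ) : cvc s 1 = s + 2 := by
  have := cvE s 0
  have h1 := cvE s 1
  have h2 : ∀ φ : PowerSeries ℝ, coeff 1 (X * φ) = coeff 0 φ := fun φ => coeff_succ_X_mul 0 φ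
  simp only [cvc, cvP, map_add, h1, h2, coeff_zero_X_mul, this]
  simp
  norm_num

lemma cvc_add_two (s : ℝ) (n : ℕ) : cvc s (n + 2) =
    s ^ (n + 2) / ((n + 2).factorial : ℝ) + 2 * (s ^ (n + 1) / ((n + 1).factorial : ℝ))
      + s ^ n / (n.factorial : ℝ) := by
  simp only [cvc, cvP, map_add, coeff_succ_X_mul, cvE]
  ring

lemma cvc_nonneg {s : ℝ} (hs : 0 ≤ s) (n : ℕ) : 0 ≤ cvc s n := by
  rcases n with _ | _ | n
  · simp [cvc_zero]
  · simp only [zero_add, cvc_one]; linarith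
  · rw [cvc_add_two]; positivity

lemma cvc_conv (a b : ℝ) (n : ℕ) :
    ∑ p ∈ Finset.HasAntidiagonal.antidiagonal n, cvc a p.1 * cvc b p.2 =
      coeff n (rescale (a + b) (PowerSeries.exp ℝ) * (1 + X) ^ 4) := by
  rw [← cvP_mul, coeff_mul]
  rfl

lemma cv_summable_aux (z : ℝ) (hz : 0 ≤ z) (k : ℕ → ℝ) (hk : ∀ n, 0 ≤ k n) (hk1 : ∀ n, k n ≤ 1) :
    Summable fun n : ℕ => z ^ n / (n.factorial : ℝ) * k n := by
  refine Summable.of_nonneg_of_le (fun n => mul_nonneg (by positivity) (hk n)) (fun n => ?_)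
    (Real.summable_pow_div_factorial z)
  exact mul_le_of_le_one_right (by positivity) (hk1 n)

lemma cv_inv_fact_le (n : ℕ) : ((n.factorial : ℝ))⁻¹ ≤ 1 :=
  inv_le_one_of_one_le₀ (by exact_mod_cast n.factorial_pos)

lemma cv_hasSum {s u : ℝ} (hs : 0 ≤ s) (hu : 0 ≤ u) :
    HasSum (fun n : ℕ => cvc s (n + 1) * (u ^ n / (n.factorial : ℝ))) (cbinom (u + s) s) := by
  have hz : 0 ≤ s * u := mul_nonneg hs hu
  have S1 := cv_summable_aux (s * u) hz (fun n => ((n.factorial : ℝ))⁻¹) (fun n => by positivity)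
    cv_inv_fact_le
  have S2 := cv_summable_aux (s * u) hz (fun n => (((n + 1).factorial : ℝ))⁻¹)
    (fun n => by positivity) (fun n => cv_inv_fact_le (n + 1))
  obtain ⟨A, hA⟩ := S1
  obtain ⟨B, hB⟩ := S2
  have e1 : cbinom (u + s) s = 2 * A + s * B + u * B := by
    refine HasSum.tsum_eq ?_
    refine (cv_congr fun n => ?_).mpr (((hA.mul_left 2).add (hB.mul_left s)).add (hB.mul_left u))
    have : (n.factorial : ℝ) ≠ 0 := by positivity
    have : ((n + 1).factorial : ℝ) ≠ 0 := by positivity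
    field_simp
    ring
  have hC : HasSum (fun n : ℕ => if n = 0 then 0 else
      s ^ (n - 1) / ((n - 1).factorial : ℝ) * (u ^ n / (n.factorial : ℝ))) (u * B) := by
    rw [← hasSum_nat_add_iff' 1]
    simp only [Finset.range_one, Finset.sum_singleton, if_true, sub_zero]
    refine (cv_congr fun n => ?_).mpr (hB.mul_left u)
    simp only [Nat.add_eq_zero_iff, one_ne_zero, and_false, if_false, Nat.add_sub_cancel]
    have : (n.factorial : ℝ) ≠ 0 := by positivity
    have : ((n + 1).factorial : ℝ) ≠ 0 := by positivity
    field_simp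
    ring
  rw [e1]
  refine (cv_congr fun n => ?_).mpr (((hA.mul_left 2).add (hB.mul_left s)).add hC)
  rcases n with _ | n
  · simp [cvc_one]; ring
  · rw [cvc_add_two]
    simp only [Nat.add_eq_zero_iff, one_ne_zero, and_false, if_false, Nat.add_sub_cancel]
    have : (n.factorial : ℝ) ≠ 0 := by positivity
    have : ((n + 1).factorial : ℝ) ≠ 0 := by positivity
    have : ((n + 1 + 1).factorial : ℝ) ≠ 0 := by positivity
    field_simp
    ring

lemma cv_beta (x : ℝ) (j : ℕ) : ∀ i : ℕ,
    ∫ u in (0 : ℝ)..x, u ^ i / (i.factorial : ℝ) * ((x - u) ^ j / (j.factorial : ℝ)) =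
      x ^ (i + j + 1) / ((i + j + 1).factorial : ℝ) := by
  induction j with
  | zero =>
    intro i
    simp [Nat.factorial_succ, integral_pow]
    have : (i.factorial : ℝ) ≠ 0 := by positivity
    field_simp
  | succ j ih =>
    intro i
    have key : ∫ u in (0 : ℝ)..x, (u ^ i / (i.factorial : ℝ) * ((x - u) ^ (j + 1) / ((j + 1).factorial : ℝ))
        - u ^ (i + 1) / ((i + 1).factorial : ℝ) * ((x - u) ^ j / (j.factorial : ℝ))) =
        x ^ (i + 1) / ((i + 1).factorial : ℝ) * ((x - x) ^ (j + 1) / ((j + 1).factorial : ℝ)) -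
        0 ^ (i + 1) / ((i + 1).factorial : ℝ) * ((x - 0) ^ (j + 1) / ((j + 1).factorial : ℝ)) := by
      refine intervalIntegral.integral_eq_sub_of_hasDerivAt
        (f := fun u => u ^ (i + 1) / ((i + 1).factorial : ℝ) * ((x - u) ^ (j + 1) / ((j + 1).factorial : ℝ)))
        (fun u _ => ?_) ?_
      · have h1 := ((hasDerivAt_id u).pow (i + 1)).div_const ((i + 1).factorial : ℝ)
        have h2 := (((hasDerivAt_id u).const_sub x).pow (j + 1)).div_const ((j + 1).factorial : ℝ)
        refine HasDerivAt.congr_deriv (h1.mul h2) ?_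
        simp only [Nat.factorial_succ, id, Nat.cast_mul, Nat.cast_add, Nat.cast_one,
          Nat.add_sub_cancel, Pi.pow_apply]
        have : (i.factorial : ℝ) ≠ 0 := by positivity
        have : (j.factorial : ℝ) ≠ 0 := by positivity
        field_simp
        ring
      · apply Continuous.intervalIntegrable
        fun_prop
    rw [intervalIntegral.integral_sub (Continuous.intervalIntegrable (by fun_prop) _ _)
      (Continuous.intervalIntegrable (by fun_prop) _ _), ih (i + 1)] at key
    simp only [sub_self, ne_eq, Nat.add_eq_zero_iff, one_ne_zero, and_false, not_false_eq_true,
      zero_pow, zero_div, mul_zero, zero_mul] at key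
    rw [show i + (j + 1) + 1 = i + 1 + j + 1 by ring]
    linarith

lemma cv_integral {a b x : ℝ} (ha : 0 ≤ a) (hb : 0 ≤ b) (hx : 0 ≤ x) :
    HasSum (fun p : ℕ × ℕ => cvc a (p.1 + 1) * cvc b (p.2 + 1) *
      (x ^ (p.1 + p.2 + 1) / ((p.1 + p.2 + 1).factorial : ℝ)))
      (∫ u in (0 : ℝ)..x, cbinom (u + a) a * cbinom ((x - u) + b) b) := by
  have hbound : ∀ {s : ℝ}, 0 ≤ s → ∀ {u : ℝ}, 0 ≤ u →
      ∀ n : ℕ, 0 ≤ cvc s (n + 1) * (u ^ n / (n.factorial : ℝ)) := fun hs _ hu n =>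
    mul_nonneg (cvc_nonneg hs _) (by positivity)
  have hprod : ∀ {u v : ℝ}, 0 ≤ u → 0 ≤ v → HasSum (fun p : ℕ × ℕ =>
      (cvc a (p.1 + 1) * (u ^ p.1 / (p.1.factorial : ℝ))) *
      (cvc b (p.2 + 1) * (v ^ p.2 / (p.2.factorial : ℝ))))
      (cbinom (u + a) a * cbinom (v + b) b) := by
    intro u v hu hv
    have h1 := cv_hasSum ha hu
    have h2 := cv_hasSum hb hv
    exact h1.mul h2 (h1.summable.mul_of_nonneg h2.summable (hbound ha hu) (hbound hb hv))
  have main := intervalIntegral.hasSum_integral_of_dominated_convergence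
    (μ := volume) (a := 0) (b := x)
    (F := fun (p : ℕ × ℕ) (u : ℝ) =>
      (cvc a (p.1 + 1) * (u ^ p.1 / (p.1.factorial : ℝ))) *
      (cvc b (p.2 + 1) * ((x - u) ^ p.2 / (p.2.factorial : ℝ))))
    (f := fun u => cbinom (u + a) a * cbinom ((x - u) + b) b)
    (fun p _ => (cvc a (p.1 + 1) * (x ^ p.1 / (p.1.factorial : ℝ))) *
      (cvc b (p.2 + 1) * (x ^ p.2 / (p.2.factorial : ℝ))))
    (fun p => (by fun_prop : Continuous _).aestronglyMeasurable)
    (fun p => Filter.Eventually.of_forall fun u hu => ?_)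
    (Filter.Eventually.of_forall fun u hu => (hprod hx hx).summable)
    intervalIntegrable_const
    (Filter.Eventually.of_forall fun u hu => ?_)
  · refine (cv_congr fun p => ?_).mpr (main)
    rw [← cv_beta x p.2 p.1, ← intervalIntegral.integral_const_mul]
    congr 1
    ext u
    ring
  · rw [Set.uIoc_of_le hx] at hu
    have h0 := hu.1.le
    have h1 : 0 ≤ x - u := sub_nonneg.2 hu.2
    rw [Real.norm_of_nonneg (mul_nonneg (hbound ha h0 _) (hbound hb h1 _))]
    have := cvc_nonneg ha (p.1 + 1)
    have := cvc_nonneg hb (p.2 + 1)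
    have := hu.2
    have : x - u ≤ x := by linarith
    gcongr
  · rw [Set.uIoc_of_le hx] at hu
    exact hprod hu.1.le (sub_nonneg.2 hu.2)

lemma cv_total {a b x : ℝ} (ha : 0 ≤ a) (hb : 0 ≤ b) (hx : 0 ≤ x) :
    HasSum (fun n : ℕ => coeff (n + 1) (rescale (a + b) (PowerSeries.exp ℝ) * (1 + X) ^ 4) *
      (x ^ n / (n.factorial : ℝ)))
    ((∫ u in (0 : ℝ)..x, cbinom (u + a) a * cbinom ((x - u) + b) b) +
      cbinom (x + a) a + cbinom (x + b) b) := by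
  have hI : HasSum (fun n : ℕ => (∑ p ∈ Finset.HasAntidiagonal.antidiagonal n, cvc a (p.1 + 1) * cvc b (p.2 + 1)) *
      (x ^ (n + 1) / ((n + 1).factorial : ℝ)))
      (∫ u in (0 : ℝ)..x, cbinom (u + a) a * cbinom ((x - u) + b) b) := by
    have h := cv_integral ha hb hx
    rw [← Finset.HasAntidiagonal.sigmaAntidiagonalEquivProd.hasSum_iff] at h
    have h2 := h.sigma (fun n => hasSum_fintype _)
    refine (cv_congr fun n => ?_).mpr (h2)
    rw [Finset.sum_mul, ← Finset.sum_coe_sort]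
    refine Finset.sum_congr rfl fun p _ => ?_
    have := Finset.HasAntidiagonal.mem_antidiagonal.1 p.2
    simp only [Function.comp, Finset.HasAntidiagonal.sigmaAntidiagonalEquivProd_apply, this]
  have hI' : HasSum (fun n : ℕ => if n = 0 then 0 else
      (∑ p ∈ Finset.HasAntidiagonal.antidiagonal (n - 1), cvc a (p.1 + 1) * cvc b (p.2 + 1)) *
      (x ^ n / (n.factorial : ℝ)))
      (∫ u in (0 : ℝ)..x, cbinom (u + a) a * cbinom ((x - u) + b) b) := by
    rw [← hasSum_nat_add_iff' 1]
    simpa using hI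
  refine (cv_congr fun n => ?_).mpr ((hI'.add (cv_hasSum ha hx)).add (cv_hasSum hb hx))
  rw [← cvc_conv]
  rcases n with _ | n
  · simp [Finset.Nat.antidiagonal_succ, cvc_zero]; ring
  · rw [Finset.Nat.antidiagonal_succ_succ']
    simp [cvc_zero, Finset.sum_map]
    ring

theorem continuous_chu_vandermonde (s₁ s₂ x : ℝ) (hs₁ : 0 ≤ s₁) (hs₂ : 0 ≤ s₂)
    (hx : 0 ≤ x) :
    (∫ u in (0 : ℝ)..x, cbinom (u + s₁) s₁ * cbinom ((x - u) + s₂) s₂) +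
        cbinom (x + s₁) s₁ + cbinom (x + s₂) s₂ =
      (∫ u in (0 : ℝ)..x,
          cbinom (u + (s₁ + s₂) / 2) ((s₁ + s₂) / 2) *
            cbinom ((x - u) + (s₁ + s₂) / 2) ((s₁ + s₂) / 2)) +
        2 * cbinom (x + (s₁ + s₂) / 2) ((s₁ + s₂) / 2) := by
  have hm : 0 ≤ (s₁ + s₂) / 2 := by positivity
  have h1 := cv_total hs₁ hs₂ hx
  have h2 := cv_total hm hm hx
  rw [add_halves] at h2
  rw [h1.unique h2]
  ring
end

section
/- For all real numbers s₁, s₂ ≥ 0 and x ≥ 0, letting s̄ = s₁ + s₂ and h(t) = {x + t choose t}, one has ∫_{0}^{x} f_{s₁}(u) f_{s₂}(x−u) du + f_{s₁}(x) + f_{s₂}(x) = h(s̄) + 2 h′(s̄) + h″(s̄), where h′ and h″ are the first and second derivatives of h in the variable t and f_s(u) = {u+s choose s}. -/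
open PowerSeries in
noncomputable def cE (t : ℝ) : PowerSeries ℝ := PowerSeries.rescale t (PowerSeries.exp ℝ)

lemma coeff_cE (t : ℝ) (n : ℕ) : PowerSeries.coeff n (cE t) = t ^ n / (n.factorial : ℝ) := by
  simp [cE, PowerSeries.coeff_rescale, PowerSeries.coeff_exp, div_eq_mul_inv]

lemma cE_mul (a b : ℝ) : cE a * cE b = cE (a + b) := PowerSeries.exp_mul_exp_eq_exp_add a b

lemma coeff_XcE (m n : ℕ) (t : ℝ) : PowerSeries.coeff n (PowerSeries.X ^ m * cE t) =
    if m ≤ n then t ^ (n - m) / ((n - m).factorial : ℝ) else 0 := by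
  rw [PowerSeries.coeff_X_pow_mul']
  simp only [coeff_cE]

lemma abs_coeff_XcE (m n : ℕ) (t R : ℝ) (h : |t| ≤ R) :
    |PowerSeries.coeff n (PowerSeries.X ^ m * cE t)| ≤ Real.exp R := by
  rw [coeff_XcE]
  split_ifs
  · rw [abs_div, abs_pow, Nat.abs_cast]
    exact (Real.pow_div_factorial_le_exp _ (abs_nonneg t) _).trans (Real.exp_le_exp.2 h)
  · simp [Real.exp_nonneg]

lemma deriv_coeff_XcE (m n : ℕ) (t : ℝ) :
    HasDerivAt (fun t => PowerSeries.coeff n (PowerSeries.X ^ m * cE t))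
      (PowerSeries.coeff n (PowerSeries.X ^ (m + 1) * cE t)) t := by
  simp only [coeff_XcE]
  by_cases h : m ≤ n
  · obtain ⟨k, rfl⟩ := Nat.exists_eq_add_of_le h
    simp only [h, if_true, Nat.add_sub_cancel_left]
    rcases k with _ | k
    · simpa using hasDerivAt_const t (1 : ℝ)
    · rw [if_pos (by omega), show m + (k + 1) - (m + 1) = k by omega]
      refine ((hasDerivAt_pow (k + 1) t).div_const ((k + 1).factorial : ℝ)).congr_deriv ?_
      rw [Nat.factorial_succ]
      push_cast
      have : (k.factorial : ℝ) ≠ 0 := by positivity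
      field_simp
  · rw [if_neg (by omega)]
    simp only [h, if_false]
    exact hasDerivAt_const _ _

noncomputable def cD (x : ℝ) (m : ℕ) (t : ℝ) : ℝ :=
  ∑' n : ℕ, PowerSeries.coeff (n + 1) (PowerSeries.X ^ m * cE t) * (x ^ n / (n.factorial : ℝ))

lemma summable_bdd (a : ℕ → ℝ) (C x : ℝ) (h : ∀ n, |a n| ≤ C) :
    Summable (fun n => a n * (x ^ n / (n.factorial : ℝ))) := by
  refine Summable.of_norm_bounded (g := fun n => C * ‖x ^ n / (n.factorial : ℝ)‖)
    ((Real.summable_pow_div_factorial x).norm.mul_left C) fun n => ?_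
  rw [norm_mul]
  exact mul_le_mul_of_nonneg_right (h n) (norm_nonneg _)

lemma hasSum_cD (x : ℝ) (m : ℕ) (t : ℝ) :
    HasSum (fun n : ℕ => PowerSeries.coeff (n + 1) (PowerSeries.X ^ m * cE t) *
      (x ^ n / (n.factorial : ℝ))) (cD x m t) :=
  (summable_bdd _ (Real.exp |t|) x fun n => abs_coeff_XcE m _ t _ le_rfl).hasSum

lemma hasDerivAt_cD (x : ℝ) (m : ℕ) (t : ℝ) : HasDerivAt (cD x m) (cD x (m + 1) t) t := by
  have hu : Summable (fun n => Real.exp (|t| + 1) * ‖x ^ n / (n.factorial : ℝ)‖) :=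
    (Real.summable_pow_div_factorial x).norm.mul_left _
  refine hasDerivAt_tsum_of_isPreconnected (t := Metric.ball (0 : ℝ) (|t| + 1)) (y₀ := t)
    (g := fun n t => PowerSeries.coeff (n + 1) (PowerSeries.X ^ m * cE t) *
      (x ^ n / (n.factorial : ℝ)))
    (g' := fun n t => PowerSeries.coeff (n + 1) (PowerSeries.X ^ (m + 1) * cE t) *
      (x ^ n / (n.factorial : ℝ)))
    hu Metric.isOpen_ball (convex_ball _ _).isPreconnected ?_ ?_ ?_ (hasSum_cD x m t).summable ?_
  · intro n y _
    exact (deriv_coeff_XcE m (n + 1) y).mul_const _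
  · intro n y hy
    rw [norm_mul]
    refine mul_le_mul_of_nonneg_right (abs_coeff_XcE _ _ _ _ ?_) (norm_nonneg _)
    simpa using (mem_ball_zero_iff.1 hy).le
  · simp
  · simp

lemma cbinom_eq (x t : ℝ) : cbinom (x + t) t = cD x 0 t + 2 * cD x 1 t + cD x 2 t := by
  have h0 := hasSum_cD x 0 t
  have h1 := hasSum_cD x 1 t
  have h2 := hasSum_cD x 2 t
  rw [← hasSum_nat_add_iff' 1] at h2
  have h := (h0.add (h1.mul_left 2)).add h2
  have e : (cD x 0 t + 2 * cD x 1 t + (cD x 2 t - ∑ i ∈ Finset.range 1,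
    PowerSeries.coeff (i + 1) (PowerSeries.X ^ 2 * cE t) * (x ^ i / (i.factorial : ℝ)))) =
    cD x 0 t + 2 * cD x 1 t + cD x 2 t := by
    simp [coeff_XcE]
  rw [e] at h
  rw [← h.tsum_eq, cbinom]
  congr 1
  funext n
  simp only [coeff_XcE]
  rw [if_pos (by omega), if_pos (by omega), if_pos (by omega)]
  have : (n.factorial : ℝ) ≠ 0 := by positivity
  have : ((n+1).factorial : ℝ) ≠ 0 := by positivity
  simp only [Nat.sub_zero, Nat.add_sub_cancel, show n + 1 + 1 - 2 = n by omega]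
  rw [show t * (x + t - t) = t * x by ring, mul_pow]
  field_simp
  ring

noncomputable def cc (t : ℝ) (n : ℕ) : ℝ :=
  PowerSeries.coeff (n + 1) ((1 + PowerSeries.X) ^ 2 * cE t)

lemma cc_eq (t : ℝ) (n : ℕ) : cc t n = PowerSeries.coeff (n + 1) (PowerSeries.X ^ 0 * cE t) +
    2 * PowerSeries.coeff (n + 1) (PowerSeries.X ^ 1 * cE t) +
    PowerSeries.coeff (n + 1) (PowerSeries.X ^ 2 * cE t) := by
  rw [cc, show ((1 + PowerSeries.X) ^ 2 * cE t : PowerSeries ℝ) = PowerSeries.X ^ 0 * cE t +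
    (PowerSeries.X ^ 1 * cE t + PowerSeries.X ^ 1 * cE t) + PowerSeries.X ^ 2 * cE t by ring]
  simp only [map_add]
  ring

lemma abs_cc (t : ℝ) (n : ℕ) : |cc t n| ≤ 4 * Real.exp |t| := by
  rw [cc_eq]
  have h0 := abs_le.1 (abs_coeff_XcE 0 (n+1) t _ le_rfl)
  have h1 := abs_le.1 (abs_coeff_XcE 1 (n+1) t _ le_rfl)
  have h2 := abs_le.1 (abs_coeff_XcE 2 (n+1) t _ le_rfl)
  rw [abs_le]
  constructor <;> linarith [h0.1, h0.2, h1.1, h1.2, h2.1, h2.2]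

lemma hasSum_cbinom (x t : ℝ) :
    HasSum (fun n => cc t n * (x ^ n / (n.factorial : ℝ))) (cbinom (x + t) t) := by
  rw [cbinom_eq]
  refine (((hasSum_cD x 0 t).add ((hasSum_cD x 1 t).mul_left 2)).add (hasSum_cD x 2 t)).congr_fun ?_
  intro n
  rw [cc_eq]; ring

lemma beta_int (x : ℝ) (k : ℕ) : ∀ j : ℕ,
    ∫ u in (0 : ℝ)..x, (u ^ j / (j.factorial : ℝ)) * ((x - u) ^ k / (k.factorial : ℝ)) =
      x ^ (j + k + 1) / ((j + k + 1).factorial : ℝ) := by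
  induction k with
  | zero =>
    intro j
    have : (j.factorial : ℝ) ≠ 0 := by positivity
    simp [Nat.factorial_succ]
    field_simp
  | succ k ih =>
    intro j
    have key : ∀ (n : ℕ) (u : ℝ), HasDerivAt (fun u : ℝ => u ^ (n + 1) / ((n + 1).factorial : ℝ))
        (u ^ n / (n.factorial : ℝ)) u := by
      intro n u
      refine ((hasDerivAt_pow (n + 1) u).div_const ((n + 1).factorial : ℝ)).congr_deriv ?_
      rw [Nat.factorial_succ]
      push_cast
      have : (n.factorial : ℝ) ≠ 0 := by positivity
      field_simp
    have hd : ∀ u ∈ Set.uIcc 0 x, HasDerivAt (fun u : ℝ => (u ^ (j + 1) / ((j + 1).factorial : ℝ)) *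
        ((x - u) ^ (k + 1) / ((k + 1).factorial : ℝ)))
        ((u ^ j / (j.factorial : ℝ)) * ((x - u) ^ (k + 1) / ((k + 1).factorial : ℝ)) -
         (u ^ (j + 1) / ((j + 1).factorial : ℝ)) * ((x - u) ^ k / (k.factorial : ℝ))) u := by
      intro u _
      have h2 := (key k (x - u)).comp u ((hasDerivAt_id u).const_sub x)
      refine ((key j u).mul h2).congr_deriv ?_
      simp only [Function.comp]
      simp
      ring
    have := intervalIntegral.integral_eq_sub_of_hasDerivAt hd
      (Continuous.intervalIntegrable (by fun_prop) _ _)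
    rw [intervalIntegral.integral_sub (Continuous.intervalIntegrable (by fun_prop) _ _)
      (Continuous.intervalIntegrable (by fun_prop) _ _), ih (j + 1)] at this
    simp at this
    rw [sub_eq_zero] at this
    rw [this]
    congr 2 <;> ring_nf

lemma conv_hasSum (s₁ s₂ x : ℝ) (hx : 0 ≤ x) :
    HasSum (fun p : ℕ × ℕ => cc s₁ p.1 * cc s₂ p.2 *
        (x ^ (p.1 + p.2 + 1) / ((p.1 + p.2 + 1).factorial : ℝ)))
      (∫ u in (0 : ℝ)..x, cbinom (u + s₁) s₁ * cbinom ((x - u) + s₂) s₂) := by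
  have main := intervalIntegral.hasSum_integral_of_dominated_convergence (μ := MeasureTheory.volume)
    (a := 0) (b := x)
    (F := fun (p : ℕ × ℕ) u => (cc s₁ p.1 * (u ^ p.1 / (p.1.factorial : ℝ))) *
      (cc s₂ p.2 * ((x - u) ^ p.2 / (p.2.factorial : ℝ))))
    (f := fun u => cbinom (u + s₁) s₁ * cbinom ((x - u) + s₂) s₂)
    (fun p _ => (4 * Real.exp |s₁| * (x ^ p.1 / (p.1.factorial : ℝ))) *
      (4 * Real.exp |s₂| * (x ^ p.2 / (p.2.factorial : ℝ)))) ?_ ?_ ?_ ?_ ?_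
  · refine main.congr_fun fun p => ?_
    rw [← beta_int, ← intervalIntegral.integral_const_mul]
    congr 1
    funext u
    ring
  · intro p
    exact Continuous.aestronglyMeasurable (by fun_prop)
  · intro p
    refine Filter.Eventually.of_forall fun u hu => ?_
    rw [Set.uIoc_of_le hx] at hu
    have h0 : 0 ≤ u := hu.1.le
    have h1 : 0 ≤ x - u := sub_nonneg.2 hu.2
    have h2 : x - u ≤ x := by linarith
    have h3 : u ≤ x := hu.2
    have a1 := abs_cc s₁ p.1
    have a2 := abs_cc s₂ p.2
    rw [norm_mul, norm_mul, norm_mul, Real.norm_eq_abs, Real.norm_eq_abs, Real.norm_eq_abs,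
      Real.norm_eq_abs, abs_of_nonneg (a := u ^ p.1 / _) (by positivity),
      abs_of_nonneg (a := (x - u) ^ p.2 / _) (by positivity)]
    gcongr
  · refine Filter.Eventually.of_forall fun u hu => ?_
    exact Summable.mul_of_nonneg ((Real.summable_pow_div_factorial x).mul_left _)
      ((Real.summable_pow_div_factorial x).mul_left _) (fun n => by positivity)
      (fun n => by positivity)
  · simp
  · refine Filter.Eventually.of_forall fun u hu => ?_
    have b1 := hasSum_cbinom u s₁
    have b2 := hasSum_cbinom (x - u) s₂
    have b3 := summable_mul_of_summable_norm b1.summable.norm b2.summable.norm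
    have b4 := b3.hasSum
    rw [← tsum_mul_tsum_of_summable_norm b1.summable.norm b2.summable.norm, b1.tsum_eq,
      b2.tsum_eq] at b4
    exact b4

lemma conv_hasSum' (s₁ s₂ x : ℝ) (hx : 0 ≤ x) :
    HasSum (fun n : ℕ => (∑ p ∈ Finset.HasAntidiagonal.antidiagonal n, cc s₁ p.1 * cc s₂ p.2) *
        (x ^ (n + 1) / ((n + 1).factorial : ℝ)))
      (∫ u in (0 : ℝ)..x, cbinom (u + s₁) s₁ * cbinom ((x - u) + s₂) s₂) := by
  have h := conv_hasSum s₁ s₂ x hx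
  rw [← Finset.HasAntidiagonal.sigmaAntidiagonalEquivProd.hasSum_iff] at h
  have h2 := h.sigma (fun n => hasSum_fintype _)
  refine h2.congr_fun fun n => ?_
  simp only [Function.comp, Finset.HasAntidiagonal.sigmaAntidiagonalEquivProd_apply]
  rw [Finset.univ_eq_attach, Finset.sum_attach (Finset.HasAntidiagonal.antidiagonal n) (fun p => cc s₁ p.1 * cc s₂ p.2 *
        (x ^ (p.1 + p.2 + 1) / ((p.1 + p.2 + 1).factorial : ℝ))), Finset.sum_mul]
  refine Finset.sum_congr rfl fun p hp => ?_
  rw [Finset.HasAntidiagonal.mem_antidiagonal.1 hp]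

lemma coeff_zero_G (t : ℝ) : PowerSeries.coeff 0 ((1 + PowerSeries.X) ^ 2 * cE t) = 1 := by
  have h := coeff_cE t 0
  simp at h
  simp [h]

lemma coeff_id (s₁ s₂ : ℝ) (n : ℕ) :
    ∑ p ∈ Finset.HasAntidiagonal.antidiagonal n, cc s₁ p.1 * cc s₂ p.2 =
      PowerSeries.coeff (n + 2) ((1 + PowerSeries.X) ^ 4 * cE (s₁ + s₂)) -
        cc s₁ (n + 1) - cc s₂ (n + 1) := by
  rw [show ((1 + PowerSeries.X) ^ 4 * cE (s₁ + s₂) : PowerSeries ℝ) =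
    ((1 + PowerSeries.X) ^ 2 * cE s₁) * ((1 + PowerSeries.X) ^ 2 * cE s₂) by
      rw [← cE_mul]; ring, PowerSeries.coeff_mul, Finset.Nat.antidiagonal_succ_succ']
  simp [-PowerSeries.coeff_zero_eq_constantCoeff, coeff_zero_G, cc]
  try ring

lemma coeff_id0 (s₁ s₂ : ℝ) :
      PowerSeries.coeff 1 ((1 + PowerSeries.X) ^ 4 * cE (s₁ + s₂)) -
        cc s₁ 0 - cc s₂ 0 = 0 := by
  rw [show ((1 + PowerSeries.X) ^ 4 * cE (s₁ + s₂) : PowerSeries ℝ) =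
    ((1 + PowerSeries.X) ^ 2 * cE s₁) * ((1 + PowerSeries.X) ^ 2 * cE s₂) by
      rw [← cE_mul]; ring, PowerSeries.coeff_mul, Finset.Nat.antidiagonal_succ]
  simp [-PowerSeries.coeff_zero_eq_constantCoeff, coeff_zero_G, cc]

lemma coeff_four (t : ℝ) (n : ℕ) :
    PowerSeries.coeff n ((1 + PowerSeries.X) ^ 4 * cE t) =
    PowerSeries.coeff n (PowerSeries.X ^ 0 * cE t) +
    4 * PowerSeries.coeff n (PowerSeries.X ^ 1 * cE t) +
    6 * PowerSeries.coeff n (PowerSeries.X ^ 2 * cE t) +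
    4 * PowerSeries.coeff n (PowerSeries.X ^ 3 * cE t) +
    PowerSeries.coeff n (PowerSeries.X ^ 4 * cE t) := by
  have hC : ((1 + PowerSeries.X) ^ 4 * cE t : PowerSeries ℝ) = PowerSeries.X ^ 0 * cE t +
    (4 : ℕ) • (PowerSeries.X ^ 1 * cE t) + (6 : ℕ) • (PowerSeries.X ^ 2 * cE t) +
    (4 : ℕ) • (PowerSeries.X ^ 3 * cE t) + PowerSeries.X ^ 4 * cE t := by
    simp only [nsmul_eq_mul]; push_cast; ring
  rw [hC]
  simp only [map_add, map_nsmul]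
  simp only [nsmul_eq_mul]
  push_cast
  rfl

theorem continuous_chu_vandermonde_deriv (s₁ s₂ x : ℝ) (hs₁ : 0 ≤ s₁) (hs₂ : 0 ≤ s₂)
    (hx : 0 ≤ x) :
    (∫ u in (0 : ℝ)..x, cbinom (u + s₁) s₁ * cbinom ((x - u) + s₂) s₂) +
        cbinom (x + s₁) s₁ + cbinom (x + s₂) s₂ =
      cbinom (x + (s₁ + s₂)) (s₁ + s₂) +
        2 * deriv (fun t : ℝ => cbinom (x + t) t) (s₁ + s₂) +
        deriv (deriv (fun t : ℝ => cbinom (x + t) t)) (s₁ + s₂) := by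
  have hf : (fun t : ℝ => cbinom (x + t) t) = fun t => cD x 0 t + 2 * cD x 1 t + cD x 2 t := by
    funext t; exact cbinom_eq x t
  have hd1 : deriv (fun t : ℝ => cbinom (x + t) t) =
      fun t => cD x 1 t + 2 * cD x 2 t + cD x 3 t := by
    funext t
    rw [hf]
    exact (((hasDerivAt_cD x 0 t).add ((hasDerivAt_cD x 1 t).const_mul 2)).add
      (hasDerivAt_cD x 2 t)).deriv
  have hd2 : deriv (deriv (fun t : ℝ => cbinom (x + t) t)) =
      fun t => cD x 2 t + 2 * cD x 3 t + cD x 4 t := by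
    funext t
    rw [hd1]
    exact (((hasDerivAt_cD x 1 t).add ((hasDerivAt_cD x 2 t).const_mul 2)).add
      (hasDerivAt_cD x 3 t)).deriv
  rw [hd2, hd1, cbinom_eq x (s₁ + s₂)]
  have H := (((((hasSum_cD x 0 (s₁ + s₂)).add ((hasSum_cD x 1 (s₁ + s₂)).mul_left 4)).add
    ((hasSum_cD x 2 (s₁ + s₂)).mul_left 6)).add ((hasSum_cD x 3 (s₁ + s₂)).mul_left 4)).add
    (hasSum_cD x 4 (s₁ + s₂)))
  have H2 := (H.sub (hasSum_cbinom x s₁)).sub (hasSum_cbinom x s₂)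
  rw [← hasSum_nat_add_iff' 1] at H2
  have H3 := conv_hasSum' s₁ s₂ x hx
  have H4 := H3.unique (H2.congr_fun fun n => by rw [coeff_id, coeff_four]; ring)
  rw [H4]
  have h0 := coeff_id0 s₁ s₂
  rw [coeff_four] at h0
  simp only [Finset.sum_range_one, pow_zero, Nat.factorial_zero, Nat.cast_one, div_one, mul_one,
    zero_add] at h0 ⊢
  linarith
end

section
/- For every real number p > 2, the Laplace transform of the continuous central binomial coefficient satisfies ∫_{0}^{∞} e^{−ps} {2s choose s} ds = √((p+2)/(p−2)) − 1. -/
lemma cb_choose (n : ℕ) :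
    Ring.choose (-(1/2) : ℝ) n * (-4) ^ n = (n.centralBinom : ℝ) := by
  have key : ∀ n : ℕ, (descPochhammer ℤ n).smeval (-(1/2) : ℝ) * (-4) ^ n
      = (n.factorial : ℝ) * (n.centralBinom : ℝ) := by
    intro n
    induction n with
    | zero => simp
    | succ k ih =>
      have h : ((k : ℝ) + 1) * ((k + 1).centralBinom : ℝ) = 2 * (2 * k + 1) * k.centralBinom := by
        exact_mod_cast Nat.succ_mul_centralBinom_succ k
      rw [descPochhammer_succ_right, Polynomial.smeval_mul, Nat.factorial_succ]
      simp only [Polynomial.smeval_sub, Polynomial.smeval_X, Polynomial.smeval_natCast, pow_one,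
        pow_zero, nsmul_eq_mul, mul_one]
      push_cast
      rw [pow_succ]
      linear_combination (2 * (2 * (k : ℝ) + 1)) * ih - (k.factorial : ℝ) * h
  have h := key n
  rw [Ring.descPochhammer_eq_factorial_smul_choose, nsmul_eq_mul, mul_assoc] at h
  exact mul_left_cancel₀ (by positivity) h

lemma cb_hasSum (x : ℝ) (h0 : 0 ≤ x) (h : 4 * x < 1) :
    HasSum (fun n : ℕ => (n.centralBinom : ℝ) * x ^ n) (1 / Real.sqrt (1 - 4 * x)) := by
  have H := (Real.one_add_rpow_hasFPowerSeriesOnBall_zero (a := -(1/2))).hasSum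
    (y := -4 * x) (by
      simp only [Metric.mem_eball, edist_zero_right]
      rw [← ofReal_norm, Real.norm_eq_abs, abs_of_nonpos (by linarith)]
      rw [ENNReal.ofReal_lt_one]; linarith)
  have e : (1 + (0 + -4 * x)) ^ (-(1 / 2) : ℝ) = 1 / Real.sqrt (1 - 4 * x) := by
    rw [show 1 + (0 + -4 * x) = 1 - 4 * x by ring, Real.sqrt_eq_rpow, Real.rpow_neg (by linarith),
      one_div ((1 - 4 * x) ^ (1 / 2 : ℝ))]
  rw [e] at H
  have e2 : (fun n : ℕ => (n.centralBinom : ℝ) * x ^ n) =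
      fun n => binomialSeries ℝ (-(1 / 2) : ℝ) n fun _ => -4 * x := by
    funext n
    rw [binomialSeries_apply, ← cb_choose]
    simp [mul_assoc]
    left
    rw [← mul_pow, neg_mul]
  rw [e2]
  exact H

lemma int_pow (p : ℝ) (hp : 0 < p) (k : ℕ) :
    MeasureTheory.IntegrableOn (fun s : ℝ => s ^ k * Real.exp (-(p * s))) (Set.Ioi 0) ∧
    ∫ s in Set.Ioi (0 : ℝ), s ^ k * Real.exp (-(p * s)) = (k.factorial : ℝ) / p ^ (k + 1) := by
  have key := Real.integral_rpow_mul_exp_neg_mul_Ioi (a := (k : ℝ) + 1) (by positivity) hp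
  simp only [add_sub_cancel_right, Real.rpow_natCast, Real.Gamma_nat_eq_factorial] at key
  have e : (1 / p) ^ ((k : ℝ) + 1) * (k.factorial : ℝ) = (k.factorial : ℝ) / p ^ (k + 1) := by
    rw [show ((k : ℝ) + 1) = ((k + 1 : ℕ) : ℝ) by push_cast; rfl, Real.rpow_natCast, one_div_pow]
    ring
  rw [e] at key
  exact ⟨.of_integral_ne_zero (by rw [key]; positivity), key⟩

theorem laplace_central_cbinom (p : ℝ) (hp : 2 < p) :
    (∫ s in Set.Ioi (0 : ℝ), Real.exp (-(p * s)) * cbinom (2 * s) s) =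
      Real.sqrt ((p + 2) / (p - 2)) - 1 := by
  have hp0 : 0 < p := by linarith
  let F : ℕ → ℝ → ℝ := fun n s =>
    (2 / (n.factorial : ℝ) ^ 2) * (s ^ (2 * n) * Real.exp (-(p * s))) +
    (2 / ((n.factorial : ℝ) * ((n + 1).factorial : ℝ))) *
      (s ^ (2 * n + 1) * Real.exp (-(p * s)))
  have hF : ∀ s, Real.exp (-(p * s)) * cbinom (2 * s) s = ∑' n, F n s := by
    intro s
    rw [cbinom, ← tsum_mul_left]
    congr 1
    ext n
    simp only [F]
    rw [show s * (2 * s - s) = s ^ 2 by ring, ← pow_mul]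
    ring
  have hi : ∀ n, MeasureTheory.IntegrableOn (F n) (Set.Ioi 0) := fun n =>
    ((int_pow p hp0 (2 * n)).1.const_mul _).add ((int_pow p hp0 (2 * n + 1)).1.const_mul _)
  have hv : ∀ n, ∫ s in Set.Ioi (0 : ℝ), F n s =
      2 / p * ((n.centralBinom : ℝ) * (1 / p ^ 2) ^ n) +
        ((n + 1).centralBinom : ℝ) * (1 / p ^ 2) ^ (n + 1) := by
    intro n
    simp only [F]
    rw [MeasureTheory.integral_add ((int_pow p hp0 (2 * n)).1.const_mul _)
      ((int_pow p hp0 (2 * n + 1)).1.const_mul _), MeasureTheory.integral_const_mul,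
      MeasureTheory.integral_const_mul, (int_pow p hp0 _).2, (int_pow p hp0 _).2]
    have c : (n.centralBinom : ℝ) * (n.factorial : ℝ) ^ 2 = ((2 * n).factorial : ℝ) := by
      have := Nat.choose_mul_factorial_mul_factorial (show n ≤ 2 * n by omega)
      rw [show 2 * n - n = n by omega, ← Nat.centralBinom_eq_two_mul_choose] at this
      rw [← this]; push_cast; ring
    have c1 : ((n : ℝ) + 1) * ((n + 1).centralBinom : ℝ) = 2 * (2 * n + 1) * n.centralBinom := by
      exact_mod_cast Nat.succ_mul_centralBinom_succ n
    have c2 : ((n + 1).centralBinom : ℝ) = 2 * (2 * n + 1) * n.centralBinom / ((n : ℝ) + 1) := by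
      rw [← c1]; field_simp
    rw [c2, Nat.factorial_succ (2 * n), Nat.factorial_succ n]
    push_cast
    rw [← c]
    have : (n.factorial : ℝ) ≠ 0 := by positivity
    simp only [one_div, inv_pow, ← pow_mul]
    field_simp
    ring
  set S := 1 / Real.sqrt (1 - 4 * (1 / p ^ 2)) with hS
  have hx : 4 * (1 / p ^ 2) < 1 := by
    rw [mul_one_div, div_lt_one (by positivity)]; nlinarith
  have hs := cb_hasSum (1 / p ^ 2) (by positivity) hx
  have hs1 : HasSum (fun n : ℕ => ((n + 1).centralBinom : ℝ) * (1 / p ^ 2) ^ (n + 1)) (S - 1) := by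
    have := (hasSum_nat_add_iff' (f := fun n : ℕ => (n.centralBinom : ℝ) * (1 / p ^ 2) ^ n) 1).2 hs
    rw [← hS] at this
    simpa using this
  rw [← hS] at hs
  have hT := (hs.mul_left (2 / p)).add hs1
  have hI := MeasureTheory.hasSum_integral_of_summable_integral_norm
    (μ := MeasureTheory.volume.restrict (Set.Ioi (0 : ℝ))) (F := F) hi (by
      refine hT.summable.congr fun n => ?_
      rw [← hv n]
      refine MeasureTheory.setIntegral_congr_fun measurableSet_Ioi fun s hs => ?_
      have : 0 < s := hs
      simp only [F]
      rw [Real.norm_of_nonneg (by positivity)])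
  simp only [hF]
  simp only [hv] at hI
  rw [hI.unique hT]
  have e1 : S = p / Real.sqrt (p ^ 2 - 4) := by
    rw [hS, show 1 - 4 * (1 / p ^ 2) = (p ^ 2 - 4) / p ^ 2 by field_simp,
      Real.sqrt_div' _ (by positivity), Real.sqrt_sq hp0.le, one_div_div]
  have e2 : Real.sqrt ((p + 2) / (p - 2)) = (p + 2) / Real.sqrt (p ^ 2 - 4) := by
    have h2 : 0 < p - 2 := by linarith
    rw [show (p + 2) / (p - 2) = (p + 2) ^ 2 / (p ^ 2 - 4) by
      rw [show p ^ 2 - 4 = (p + 2) * (p - 2) by ring]; field_simp,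
      Real.sqrt_div (by positivity), Real.sqrt_sq (by positivity)]
  have : 0 < Real.sqrt (p ^ 2 - 4) := Real.sqrt_pos.2 (by nlinarith)
  rw [e2, e1]
  field_simp
  ring
end

section
/- For all real numbers x ≥ 0 and 0 < p < 1, the normalization constant of the continuous binomial distribution is A_{x,p} = ∫_{0}^{x} {x choose s} p^s (1−p)^{x−s} ds = 2 (p(1−p))^{x/2} [ cosh((x/2)√(4 + L²)) − cosh((x/2) L) + (2/√(4 + L²)) sinh((x/2)√(4 + L²)) ], where L = log(p/(1−p)). -/
noncomputable def cbC (t : ℝ) (n : ℕ) : ℝ :=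
  2 / ((n.factorial : ℝ)) ^ 2 + (2 * t) / ((n.factorial : ℝ) * ((n + 1).factorial : ℝ))

lemma cbC_nonneg (t : ℝ) (ht : 0 ≤ t) (n : ℕ) : 0 ≤ cbC t n := by
  unfold cbC; positivity

lemma cbC_le (t : ℝ) (ht : 0 ≤ t) (n : ℕ) : cbC t n ≤ (2 + 2 * t) / (n.factorial : ℝ) := by
  unfold cbC
  have h1 : (1 : ℝ) ≤ n.factorial := by exact_mod_cast Nat.succ_le_of_lt n.factorial_pos
  have h2 : (1 : ℝ) ≤ (n+1).factorial := by exact_mod_cast Nat.succ_le_of_lt (n+1).factorial_pos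
  rw [add_div]
  gcongr
  · nlinarith
  · nlinarith

lemma cbC_summable (t y : ℝ) (ht : 0 ≤ t) : Summable (fun n : ℕ => y ^ n * cbC t n) := by
  have h := (Real.summable_pow_div_factorial |y|).mul_left (2 + 2 * t)
  refine Summable.of_norm_bounded h (fun n => ?_)
  rw [Real.norm_eq_abs, abs_mul, abs_pow, abs_of_nonneg (cbC_nonneg t ht n)]
  calc |y| ^ n * cbC t n ≤ |y| ^ n * ((2 + 2 * t) / (n.factorial : ℝ)) := by
        gcongr; exact cbC_le t ht n
    _ = _ := by ring

lemma exp_hasSum2 (r : ℝ) : HasSum (fun k : ℕ => r ^ (2 * k) / ((2 * k).factorial : ℝ) +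
    r ^ (2 * k + 1) / ((2 * k + 1).factorial : ℝ)) (Real.exp r) := by
  rw [← Real.cosh_add_sinh]
  exact (Real.hasSum_cosh r).add (Real.hasSum_sinh r)

noncomputable def Jv (t : ℝ) (n k : ℕ) : ℝ :=
  2 * t ^ (2 * n + 2 * k + 1) * 4 ^ n * (n.factorial : ℝ) * ((n + k).factorial : ℝ) *
    ((2 * k).factorial : ℝ) / ((k.factorial : ℝ) * ((2 * n + 2 * k + 1).factorial : ℝ))

lemma J_eq (t : ℝ) (n : ℕ) : ∀ k : ℕ,
    (∫ u in (-t)..t, (t ^ 2 - u ^ 2) ^ n * u ^ (2 * k)) = Jv t n k := by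
  induction n with
  | zero =>
    intro k
    simp only [pow_zero, one_mul, integral_pow, Jv, Nat.factorial, mul_zero, zero_add]
    have := Nat.factorial_ne_zero k
    have := Nat.factorial_ne_zero (2 * k)
    push_cast
    rw [Odd.neg_pow ⟨k, rfl⟩]
    field_simp
    ring
  | succ n ih =>
    intro k
    have h1 : ∀ u ∈ Set.uIcc (-t) t, HasDerivAt (fun u : ℝ => (t ^ 2 - u ^ 2) ^ (n + 1))
        (-(2 * (n + 1)) * ((t ^ 2 - u ^ 2) ^ n * u)) u := by
      intro u _
      have := (((hasDerivAt_id u).pow 2).const_sub (t ^ 2)).pow (n + 1)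
      refine this.congr_deriv ?_
      simp; ring
    have h2 : ∀ u ∈ Set.uIcc (-t) t, HasDerivAt (fun u : ℝ => u ^ (2 * k + 1) / (2 * k + 1))
        (u ^ (2 * k)) u := by
      intro u _
      have := ((hasDerivAt_id u).pow (2 * k + 1)).div_const (2 * k + 1 : ℝ)
      refine this.congr_deriv ?_
      have : (2 * k + 1 : ℝ) ≠ 0 := by positivity
      simp; field_simp
    rw [intervalIntegral.integral_mul_deriv_eq_deriv_mul h1 h2
      (Continuous.intervalIntegrable (by fun_prop) _ _)
      (Continuous.intervalIntegrable (by fun_prop) _ _)]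
    have h3 : ∀ u : ℝ, -(2 * ((n:ℝ) + 1)) * ((t ^ 2 - u ^ 2) ^ n * u) *
        (u ^ (2 * k + 1) / (2 * k + 1)) =
        (-(2 * ((n:ℝ) + 1)) / (2 * k + 1)) * ((t ^ 2 - u ^ 2) ^ n * u ^ (2 * (k + 1))) := by
      intro u; ring
    simp only [h3]
    rw [intervalIntegral.integral_const_mul, ih (k + 1)]
    simp only [Jv]
    have e1 : 2 * (n + 1) + 2 * k + 1 = 2 * n + 2 * (k + 1) + 1 := by ring
    have e2 : n + 1 + k = n + (k + 1) := by ring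
    rw [e1, e2, show 2 * (k + 1) = 2 * k + 1 + 1 by ring]
    simp only [Nat.factorial_succ (2 * k + 1), Nat.factorial_succ (2 * k), Nat.factorial_succ k,
      Nat.factorial_succ n]
    have := Nat.factorial_ne_zero k
    have := Nat.factorial_ne_zero (2 * n + (2 * k + 1 + 1) + 1)
    push_cast
    simp only [neg_sq, sub_self, ne_eq, Nat.succ_ne_zero, not_false_eq_true, zero_pow, zero_mul]
    field_simp
    ring

lemma J_odd (t : ℝ) (n k : ℕ) :
    (∫ u in (-t)..t, (t ^ 2 - u ^ 2) ^ n * u ^ (2 * k + 1)) = 0 := by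
  have h := intervalIntegral.integral_comp_neg (a := -t) (b := t)
    (fun u : ℝ => (t ^ 2 - u ^ 2) ^ n * u ^ (2 * k + 1))
  simp only [neg_sq, Odd.neg_pow (⟨k, rfl⟩ : Odd (2 * k + 1)), neg_neg, mul_neg,
    intervalIntegral.integral_neg] at h
  linarith

noncomputable def ff (t L : ℝ) (i : ℕ × ℕ) : C(ℝ, ℝ) where
  toFun u := ((t ^ 2 - u ^ 2) ^ i.1 * cbC t i.1) *
    ((u * L) ^ (2 * i.2) / ((2 * i.2).factorial : ℝ) +
      (u * L) ^ (2 * i.2 + 1) / ((2 * i.2 + 1).factorial : ℝ))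
  continuous_toFun := by fun_prop

lemma ff_int (t L : ℝ) (i : ℕ × ℕ) : (∫ u in (-t)..t, ff t L i u) =
    cbC t i.1 * (L ^ (2 * i.2) / ((2 * i.2).factorial : ℝ)) * Jv t i.1 i.2 := by
  have h : ∀ u, ff t L i u =
      cbC t i.1 * (L ^ (2 * i.2) / ((2 * i.2).factorial : ℝ)) *
        ((t ^ 2 - u ^ 2) ^ i.1 * u ^ (2 * i.2)) +
      cbC t i.1 * (L ^ (2 * i.2 + 1) / ((2 * i.2 + 1).factorial : ℝ)) *
        ((t ^ 2 - u ^ 2) ^ i.1 * u ^ (2 * i.2 + 1)) := by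
    intro u; simp only [ff, ContinuousMap.coe_mk, mul_pow]; ring
  simp only [h]
  rw [intervalIntegral.integral_add (Continuous.intervalIntegrable (by fun_prop) _ _)
      (Continuous.intervalIntegrable (by fun_prop) _ _),
    intervalIntegral.integral_const_mul, intervalIntegral.integral_const_mul, J_eq, J_odd]
  ring

lemma ff_sum (t L : ℝ) (ht : 0 ≤ t) (u : ℝ) :
    HasSum (fun i => ff t L i u) (cbinom (2 * t) (t + u) * Real.exp (u * L)) := by
  have h1 : HasSum (fun n : ℕ => (t ^ 2 - u ^ 2) ^ n * cbC t n) (cbinom (2 * t) (t + u)) := by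
    have := (cbC_summable t (t ^ 2 - u ^ 2) ht).hasSum
    convert this using 1
    unfold cbinom cbC
    rw [show (t + u) * (2 * t - (t + u)) = t ^ 2 - u ^ 2 by ring]
  have h2 := exp_hasSum2 (u * L)
  have h3 := summable_mul_of_summable_norm h1.summable.norm h2.summable.norm
  exact h1.mul h2 h3

lemma ff_norm (t L : ℝ) (ht : 0 ≤ t) : Summable (fun i => ‖(ff t L i).restrict
    (⟨Set.uIcc (-t) t, isCompact_uIcc⟩ : TopologicalSpace.Compacts ℝ)‖) := by
  have hs : Summable (fun i : ℕ × ℕ => ((t ^ 2) ^ i.1 * cbC t i.1) *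
    (|t * L| ^ (2 * i.2) / ((2 * i.2).factorial : ℝ) +
      |t * L| ^ (2 * i.2 + 1) / ((2 * i.2 + 1).factorial : ℝ))) := by
    have a1 := (cbC_summable t (t ^ 2) ht).norm
    have a2 := (exp_hasSum2 |t * L|).summable.norm
    have a3 := summable_mul_of_summable_norm a1 a2
    exact a3
  refine Summable.of_nonneg_of_le (fun _ => norm_nonneg _) (fun i => ?_) hs
  have hc := cbC_nonneg t ht i.1
  rw [ContinuousMap.norm_le _ (by positivity)]
  rintro ⟨u, hu⟩
  have hu' : |u| ≤ t := by
    have : u ∈ Set.uIcc (-t) t := hu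
    rw [Set.uIcc_of_le (by linarith)] at this
    exact abs_le.2 this
  have hsq : |t ^ 2 - u ^ 2| ≤ t ^ 2 := by
    have : u ^ 2 ≤ t ^ 2 := sq_le_sq' (abs_le.1 hu').1 (abs_le.1 hu').2
    rw [abs_of_nonneg (by linarith)]
    nlinarith [sq_nonneg u]
  have hm : |u * L| ≤ |t * L| := by
    rw [abs_mul, abs_mul, abs_of_nonneg ht]; gcongr
  simp only [ContinuousMap.restrict_apply, ff, ContinuousMap.coe_mk, Real.norm_eq_abs]
  rw [abs_mul, abs_mul, abs_of_nonneg hc, abs_pow]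
  gcongr
  refine (abs_add_le _ _).trans ?_
  rw [abs_div, abs_div, abs_pow, abs_pow, Nat.abs_cast, Nat.abs_cast]
  gcongr

lemma main_hasSum (t L : ℝ) (ht : 0 ≤ t) :
    HasSum (fun i : ℕ × ℕ =>
      cbC t i.1 * (L ^ (2 * i.2) / ((2 * i.2).factorial : ℝ)) * Jv t i.1 i.2)
      (∫ u in (-t)..t, cbinom (2 * t) (t + u) * Real.exp (u * L)) := by
  have h := intervalIntegral.hasSum_intervalIntegral_of_summable_norm (ff_norm t L ht)
  simp only [ff_int] at h
  simp only [fun u => (ff_sum t L ht u).tsum_eq] at h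
  exact h

lemma term_eq (t L : ℝ) (n k : ℕ) :
    cbC t n * (L ^ (2 * k) / ((2 * k).factorial : ℝ)) * Jv t n k =
      4 * (t ^ (2 * (n + k) + 1) / ((2 * (n + k) + 1).factorial : ℝ)) *
        ((4 : ℝ) ^ n * (L ^ 2) ^ k * ((n + k).choose n : ℝ)) +
      2 * (t ^ (2 * (n + k + 1)) / ((2 * (n + k + 1)).factorial : ℝ)) *
        ((4 : ℝ) ^ (n + 1) * (L ^ 2) ^ k * ((n + k + 1).choose (n + 1) : ℝ)) := by
  have c1 : ((n + k).choose n : ℝ) = (n + k).factorial / (n.factorial * k.factorial) :=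
    Nat.cast_add_choose ℝ
  have c2 : ((n + k + 1).choose (n + 1) : ℝ) =
      (n + k + 1).factorial / ((n + 1).factorial * k.factorial) := by
    have := Nat.cast_add_choose ℝ (a := n + 1) (b := k)
    rwa [show n + 1 + k = n + k + 1 by ring] at this
  rw [c1, c2]
  unfold cbC Jv
  rw [show 2 * (n + k + 1) = (2 * n + 2 * k + 1) + 1 by ring,
    show 2 * (n + k) + 1 = 2 * n + 2 * k + 1 by ring]
  simp only [Nat.factorial_succ (2 * n + 2 * k + 1), Nat.factorial_succ n,
    Nat.factorial_succ (n + k)]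
  have := Nat.factorial_ne_zero n
  have := Nat.factorial_ne_zero k
  have := Nat.factorial_ne_zero (n + k)
  have := Nat.factorial_ne_zero (2 * k)
  have := Nat.factorial_ne_zero (2 * n + 2 * k + 1)
  push_cast
  have : (2 * n + 2 * k + 1 + 1 : ℝ) ≠ 0 := by positivity
  field_simp
  ring

lemma diag_eq (t L : ℝ) (m : ℕ) :
    (∑ i ∈ Finset.HasAntidiagonal.antidiagonal m,
      cbC t i.1 * (L ^ (2 * i.2) / ((2 * i.2).factorial : ℝ)) * Jv t i.1 i.2) =
      4 * (t ^ (2 * m + 1) / ((2 * m + 1).factorial : ℝ)) * (4 + L ^ 2) ^ m +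
      2 * (t ^ (2 * (m + 1)) / ((2 * (m + 1)).factorial : ℝ)) *
        ((4 + L ^ 2) ^ (m + 1) - (L ^ 2) ^ (m + 1)) := by
  have hb := fun m : ℕ => (Commute.all (4 : ℝ) (L ^ 2)).add_pow' m
  rw [hb (m + 1), hb m, Finset.Nat.sum_antidiagonal_succ]
  simp only [pow_zero, Nat.choose_zero_right, one_smul, one_mul, add_sub_cancel_left,
    Finset.mul_sum]
  rw [← Finset.sum_add_distrib]
  refine Finset.sum_congr rfl (fun i hi => ?_)
  rw [Finset.HasAntidiagonal.mem_antidiagonal] at hi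
  rw [term_eq, hi]
  simp only [nsmul_eq_mul]
  ring

lemma diag_sum (t L : ℝ) :
    HasSum (fun m : ℕ =>
      4 * (t ^ (2 * m + 1) / ((2 * m + 1).factorial : ℝ)) * (4 + L ^ 2) ^ m +
      2 * (t ^ (2 * (m + 1)) / ((2 * (m + 1)).factorial : ℝ)) *
        ((4 + L ^ 2) ^ (m + 1) - (L ^ 2) ^ (m + 1)))
      (2 * (Real.cosh (t * √(4 + L ^ 2)) - Real.cosh (t * L) +
        2 / √(4 + L ^ 2) * Real.sinh (t * √(4 + L ^ 2)))) := by
  have hq : √(4 + L ^ 2) ^ 2 = 4 + L ^ 2 := Real.sq_sqrt (by positivity)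
  have hq0 : √(4 + L ^ 2) ≠ 0 := (Real.sqrt_pos.2 (by positivity)).ne'
  set q := √(4 + L ^ 2)
  rw [← hq]
  have h1 := (Real.hasSum_sinh (t * q)).mul_left (4 / q)
  have h2 := (((Real.hasSum_cosh (t * q)).sub (Real.hasSum_cosh (t * L))).mul_left 2)
  rw [← hasSum_nat_add_iff' 1] at h2
  have h3 := h1.add h2
  have key : ∀ {f g : ℕ → ℝ} {a b : ℝ}, HasSum f a → g = f → b = a → HasSum g b := by
    rintro f g a b h rfl rfl; exact h
  refine key h3 ?_ ?_
  · funext m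
    have := Nat.factorial_ne_zero (2 * m + 1)
    have := Nat.factorial_ne_zero (2 * (m + 1))
    simp only [mul_pow, ← pow_mul]
    field_simp
    ring
  · simp; ring

lemma int_eq (t L : ℝ) (ht : 0 ≤ t) :
    (∫ u in (-t)..t, cbinom (2 * t) (t + u) * Real.exp (u * L)) =
      (2 * (Real.cosh (t * √(4 + L ^ 2)) - Real.cosh (t * L) +
        2 / √(4 + L ^ 2) * Real.sinh (t * √(4 + L ^ 2)))) := by
  have h := main_hasSum t L ht
  rw [← (Finset.HasAntidiagonal.sigmaAntidiagonalEquivProd (A := ℕ)).hasSum_iff] at h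
  have h2 := h.sigma (fun m => hasSum_fintype _)
  refine h2.unique ?_
  convert diag_sum t L using 1
  funext m
  rw [← diag_eq]
  exact Finset.sum_coe_sort (Finset.HasAntidiagonal.antidiagonal m) (fun i : ℕ × ℕ =>
      cbC t i.1 * (L ^ (2 * i.2) / ((2 * i.2).factorial : ℝ)) * Jv t i.1 i.2)

theorem cbinom_normalization (x p : ℝ) (hx : 0 ≤ x) (hp : 0 < p) (hp1 : p < 1) :
    (∫ s in (0 : ℝ)..x, cbinom x s * p ^ s * (1 - p) ^ (x - s)) =
      2 * (p * (1 - p)) ^ (x / 2) *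
        (Real.cosh (x / 2 * Real.sqrt (4 + Real.log (p / (1 - p)) ^ 2)) -
          Real.cosh (x / 2 * Real.log (p / (1 - p))) +
          2 / Real.sqrt (4 + Real.log (p / (1 - p)) ^ 2) *
            Real.sinh (x / 2 * Real.sqrt (4 + Real.log (p / (1 - p)) ^ 2))) := by
  have hq : 0 < 1 - p := by linarith
  have h := int_eq (x / 2) (Real.log (p / (1 - p))) (by linarith)
  have hs := intervalIntegral.integral_comp_add_left (a := -(x / 2)) (b := x / 2)
    (fun s => cbinom x s * p ^ s * (1 - p) ^ (x - s)) (x / 2)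
  rw [add_neg_cancel, add_halves] at hs
  rw [← hs]
  have he : ∀ u : ℝ, cbinom x (x / 2 + u) * p ^ (x / 2 + u) * (1 - p) ^ (x - (x / 2 + u)) =
      (p * (1 - p)) ^ (x / 2) *
        (cbinom (2 * (x / 2)) (x / 2 + u) * Real.exp (u * Real.log (p / (1 - p)))) := by
    intro u
    rw [Real.rpow_def_of_pos hp, Real.rpow_def_of_pos hq, Real.rpow_def_of_pos (mul_pos hp hq),
      Real.log_mul hp.ne' hq.ne', Real.log_div hp.ne' hq.ne', mul_assoc, ← Real.exp_add,
      mul_left_comm, ← Real.exp_add, show 2 * (x / 2) = x by ring]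
    congr 2
    ring
  simp only [he]
  rw [intervalIntegral.integral_const_mul, h]
  ring
end
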